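/- arXiv:1110.4658 — 10 statements merged into one kernel-verified Lean document; each statement's English description precedes it below -/
import Mathlib

section
/- Let f₁, a₁, a₂, a₃, h ∈ ℝ and define the cubic polynomial F(y) = f₁ + a₁y + a₂y² + a₃y³. Then the following are equivalent: (A) for every T > 0 there exists a continuous function y : [0,T] → ℝ with y(t) = h + ∫_t^T F(y(s)) ds for all t ∈ [0,T]; (B) at least one of the following holds: (i) F(h) ≥ 0 and F has a real zero in [h, ∞); (ii) F(h) ≤ 0 and F has a real zero in (−∞, h]; (iii) a₃ = 0 and a₂ = 0. -/
open MeasureTheory Set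

lemma aux_of_forward (F u : ℝ → ℝ) (hc : Continuous F) (h T : ℝ) (hT : 0 < T)
    (hu0 : u 0 = h) (hu : ∀ t ∈ Icc (0:ℝ) T, HasDerivWithinAt u (F (u t)) (Icc 0 T) t) :
    ∃ y : ℝ → ℝ, ContinuousOn y (Icc 0 T) ∧
        ∀ t ∈ Icc (0:ℝ) T, y t = h + ∫ s in t..T, F (y s) := by
  have huc : ContinuousOn u (Icc 0 T) := fun t ht => (hu t ht).continuousWithinAt
  refine ⟨fun t => u (T - t), ?_, ?_⟩
  · refine huc.comp (by fun_prop) ?_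
    intro t ht
    exact ⟨by linarith [ht.2], by linarith [ht.1]⟩
  · intro t ht
    have h1 : (∫ s in t..T, F (u (T - s))) = ∫ s in (T - T)..(T - t), F (u s) :=
      intervalIntegral.integral_comp_sub_left (fun s => F (u s)) T
    have hle : (0:ℝ) ≤ T - t := by linarith [ht.2]
    have hsub : Icc 0 (T - t) ⊆ Icc 0 T := Icc_subset_Icc_right (by linarith [ht.1])
    have h2 : (∫ s in (0:ℝ)..(T - t), F (u s)) = u (T - t) - u 0 := by
      refine intervalIntegral.integral_eq_sub_of_hasDerivAt_of_le hle (huc.mono hsub) ?_ ?_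
      · intro x hx
        exact (hu x (hsub (Ioo_subset_Icc_self hx))).hasDerivAt
          (Icc_mem_nhds hx.1 (by linarith [hx.2, ht.1]))
      · apply ContinuousOn.intervalIntegrable
        rw [uIcc_of_le hle]
        exact hc.comp_continuousOn (huc.mono hsub)
    show u (T - t) = h + ∫ s in t..T, F (u (T - s))
    rw [h1, sub_self, h2, hu0]
    ring

lemma aux_upper (u u' : ℝ → ℝ) (T z : ℝ)
    (hu0 : u 0 ≤ z) (hu : ∀ t ∈ Icc (0:ℝ) T, HasDerivWithinAt u (u' t) (Icc 0 T) t)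
    (hb : ∀ t ∈ Icc (0:ℝ) T, z < u t → u' t ≤ 0) : ∀ t ∈ Icc (0:ℝ) T, u t ≤ z := by
  intro t ht
  apply le_of_forall_pos_le_add
  intro e he
  have hT1 : 0 < T + 1 := by linarith [ht.1, ht.2]
  have key := image_le_of_deriv_right_lt_deriv_boundary (f := u) (f' := u') (a := 0) (b := T)
    (fun t ht => (hu t ht).continuousWithinAt)
    (fun x hx => (hu x ⟨hx.1, hx.2.le⟩).mono_of_mem_nhdsWithin
      (Icc_mem_nhdsGE_of_mem hx))
    (B := fun s => z + (e / (T + 1)) * (s + 1)) (B' := fun _ => e / (T + 1))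
    (by have : 0 < e / (T + 1) := by positivity
        simp; linarith)
    (by intro x
        have := (((hasDerivAt_id x).add_const (1:ℝ)).const_mul (e / (T + 1))).const_add z
        simpa using this)
    (by intro x hx hxe
        have hpos : 0 < e / (T + 1) := by positivity
        have : 0 < (e / (T + 1)) * (x + 1) := mul_pos hpos (by linarith [hx.1])
        have := hb x ⟨hx.1, hx.2.le⟩ (by rw [hxe]; linarith)
        linarith) ht
  refine key.trans ?_
  have : (e / (T + 1)) * (t + 1) ≤ (e / (T + 1)) * (T + 1) :=
    mul_le_mul_of_nonneg_left (by linarith [ht.2]) (by positivity)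
  have h3 : (e / (T + 1)) * (T + 1) = e := by field_simp
  linarith

lemma aux_exists (F : ℝ → ℝ) (hF : ContDiff ℝ 1 F) (h lo hi T : ℝ) (hT : 0 < T)
    (hlo : lo ≤ h) (hhi : h ≤ hi) (hFlo : 0 ≤ F lo) (hFhi : F hi ≤ 0) :
    ∃ u : ℝ → ℝ, u 0 = h ∧
      ∀ t ∈ Icc (0:ℝ) T, HasDerivWithinAt u (F (u t)) (Icc 0 T) t := by
  have hle : lo ≤ hi := hlo.trans hhi
  obtain ⟨K, hK⟩ := (hF.contDiffOn (s := Icc lo hi)).exists_lipschitzOnWith one_ne_zero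
    (convex_Icc lo hi) isCompact_Icc
  obtain ⟨L, hL⟩ := isCompact_Icc.exists_bound_of_continuousOn
    (hF.continuous.continuousOn (s := Icc lo hi))
  set G : ℝ → ℝ := fun y => F (projIcc lo hi hle y) with hG
  have hGl : LipschitzWith K G := by
    have := (hK.to_restrict).comp (LipschitzWith.projIcc hle)
    rw [mul_one] at this
    exact this
  have hL0 : 0 ≤ L := (norm_nonneg _).trans (hL lo ⟨le_rfl, hle⟩)
  have hPL : IsPicardLindelof (fun _ : ℝ => G) (tmin := 0) (tmax := T) ⟨0, le_rfl, hT.le⟩ h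
      (L.toNNReal * T.toNNReal) 0 L.toNNReal K := by
    refine IsPicardLindelof.of_time_independent ?_ hGl.lipschitzOnWith ?_
    · intro x _
      rw [Real.coe_toNNReal _ hL0]
      exact hL _ (projIcc lo hi hle x).2
    · simp [hT.le]
  obtain ⟨u, hu0, hu⟩ := hPL.exists_eq_forall_mem_Icc_hasDerivWithinAt₀
  replace hu0 : u 0 = h := hu0
  have hup := aux_upper u (fun t => G (u t)) T hi (by rw [hu0]; exact hhi) hu (by
    intro t _ htz
    simp only [hG]
    rw [projIcc_of_right_le hle htz.le]
    exact hFhi)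
  have hdn := aux_upper (fun t => - u t) (fun t => - G (u t)) T (-lo)
    (by simp only [hu0]; linarith) (fun t ht => (hu t ht).neg) (by
    intro t _ htz
    simp only [hG]
    rw [projIcc_of_le_left hle (by linarith : u t ≤ lo)]
    linarith)
  refine ⟨u, hu0, fun t ht => ?_⟩
  have := hu t ht
  simp only [hG] at this
  rwa [projIcc_of_mem hle ⟨by linarith [hdn t ht], hup t ht⟩] at this

lemma aux_lin (f a h : ℝ) : ∃ u : ℝ → ℝ, u 0 = h ∧ ∀ t, HasDerivAt u (f + a * u t) t := by
  by_cases ha : a = 0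
  · subst ha
    refine ⟨fun t => h + f * t, by simp, fun t => ?_⟩
    simpa using ((hasDerivAt_id t).const_mul f).const_add h
  · refine ⟨fun t => (h + f / a) * Real.exp (a * t) - f / a, by simp, fun t => ?_⟩
    have := ((((hasDerivAt_id t).const_mul a).exp).const_mul (h + f / a)).sub_const (f / a)
    refine this.congr_deriv ?_
    simp only [id, mul_one]
    field_simp
    ring

lemma aux_forward (F y : ℝ → ℝ) (hc : Continuous F) (h T : ℝ) (hT : 0 < T)
    (hy : ContinuousOn y (Icc 0 T))
    (hyt : ∀ t ∈ Icc (0:ℝ) T, y t = h + ∫ s in t..T, F (y s)) :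
    ∃ u : ℝ → ℝ, u 0 = h ∧
      ∀ t ∈ Icc (0:ℝ) T, HasDerivWithinAt u (F (u t)) (Icc 0 T) t := by
  set Y : ℝ → ℝ := IccExtend hT.le ((Icc 0 T).domRestrict y) with hY
  have hYc : Continuous Y := (continuousOn_iff_continuous_domRestrict.mp hy).Icc_extend'
  have hYe : ∀ t ∈ Icc (0:ℝ) T, Y t = y t := fun t ht => by
    rw [hY, IccExtend_of_mem _ _ ht]; rfl
  have heq : ∀ t ∈ Icc (0:ℝ) T, Y (T - t) = h + ∫ s in (0:ℝ)..t, F (Y (T - s)) := by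
    intro t ht
    have ht' : T - t ∈ Icc (0:ℝ) T := ⟨by linarith [ht.2], by linarith [ht.1]⟩
    have h1 : (∫ s in (0:ℝ)..t, F (Y (T - s))) = ∫ s in (T - t)..(T - 0), F (Y s) :=
      intervalIntegral.integral_comp_sub_left (fun s => F (Y s)) T
    rw [h1, hYe _ ht', hyt _ ht', sub_zero]
    congr 1
    apply intervalIntegral.integral_congr
    intro s hs
    rw [uIcc_of_le ht'.2] at hs
    simp only
    rw [hYe s ⟨ht'.1.trans hs.1, hs.2⟩]
  refine ⟨fun t => h + ∫ s in (0:ℝ)..t, F (Y (T - s)), by simp, fun t ht => ?_⟩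
  simp only
  rw [← heq t ht]
  have hcc : Continuous fun s => F (Y (T - s)) := by fun_prop
  exact ((hcc.integral_hasStrictDerivAt 0 t).hasDerivAt.const_add h).hasDerivWithinAt

lemma aux_lower (f1 a1 a2 a3 h : ℝ) (F : ℝ → ℝ)
    (hF : ∀ y : ℝ, F y = f1 + a1 * y + a2 * y ^ 2 + a3 * y ^ 3)
    (hpos : ∀ y, h ≤ y → 0 < F y) (hne : ¬ (a3 = 0 ∧ a2 = 0)) :
    ∃ c > 0, ∀ y, h ≤ y → c * (1 + y ^ 2) ≤ F y := by
  have hev : ∃ M, h ≤ M ∧ ∃ c > 0, ∀ y, M ≤ y → c * (1 + y ^ 2) ≤ F y := by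
    set S := |f1| + |a1| + |a2| with hS
    have n1 := abs_nonneg f1
    have n2 := abs_nonneg a1
    have n3 := abs_nonneg a2
    have hS0 : 0 ≤ S := by positivity
    have hlow : ∀ y, 1 ≤ y → |f1 + a1 * y + a2 * y ^ 2| ≤ S * y ^ 2 := by
      intro y hy
      have e1 : |f1 + a1 * y + a2 * y ^ 2| ≤ |f1| + |a1| * y + |a2| * y ^ 2 := by
        refine (abs_add_three _ _ _).trans ?_
        rw [abs_mul, abs_mul, abs_of_nonneg (by linarith : 0 ≤ y), abs_of_nonneg (sq_nonneg y)]
      have e2 : |f1| ≤ |f1| * y ^ 2 := le_mul_of_one_le_right n1 (by nlinarith)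
      have e3 : |a1| * y ≤ |a1| * y ^ 2 := mul_le_mul_of_nonneg_left (by nlinarith) n2
      rw [hS]; linarith
    have hlow2 : ∀ y, 1 ≤ y → |f1 + a1 * y| ≤ S * y := by
      intro y hy
      have e1 : |f1 + a1 * y| ≤ |f1| + |a1| * y := by
        refine (abs_add_le _ _).trans ?_
        rw [abs_mul, abs_of_nonneg (by linarith : 0 ≤ y)]
      have e2 : |f1| ≤ |f1| * y := le_mul_of_one_le_right n1 hy
      have e3 : 0 ≤ |a2| * y := mul_nonneg n3 (by linarith)
      rw [hS]; linarith
    rcases lt_trichotomy a3 0 with h3 | h3 | h3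
    · exfalso
      set y := max (max h 1) (S / (-a3)) with hy
      have y1 : h ≤ y := (le_max_left _ _).trans (le_max_left _ _)
      have y2 : 1 ≤ y := (le_max_right _ _).trans (le_max_left _ _)
      have y3 : S / (-a3) ≤ y := le_max_right _ _
      rw [div_le_iff₀ (by linarith)] at y3
      have := hpos y y1
      rw [hF] at this
      have b := (abs_le.mp (hlow y y2)).2
      have : (S + a3 * y) * y ^ 2 ≤ 0 := mul_nonpos_of_nonpos_of_nonneg (by linarith) (sq_nonneg y)
      nlinarith
    · have h2 : a2 ≠ 0 := fun h2 => hne ⟨h3, h2⟩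
      rcases lt_or_gt_of_ne h2 with h2 | h2
      · exfalso
        set y := max (max h 1) (S / (-a2)) with hy
        have y1 : h ≤ y := (le_max_left _ _).trans (le_max_left _ _)
        have y2 : 1 ≤ y := (le_max_right _ _).trans (le_max_left _ _)
        have y3 : S / (-a2) ≤ y := le_max_right _ _
        rw [div_le_iff₀ (by linarith)] at y3
        have := hpos y y1
        rw [hF, h3] at this
        have b := (abs_le.mp (hlow2 y y2)).2
        have : (S + a2 * y) * y ≤ 0 := mul_nonpos_of_nonpos_of_nonneg (by linarith) (by linarith)
        nlinarith
      · refine ⟨max (max h 1) (2 * S / a2), (le_max_left _ _).trans (le_max_left _ _),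
          a2 / 4, by positivity, fun y hy => ?_⟩
        have y2 : 1 ≤ y := ((le_max_right _ _).trans (le_max_left _ _)).trans hy
        have y3 : 2 * S / a2 ≤ y := (le_max_right _ _).trans hy
        rw [div_le_iff₀ h2] at y3
        rw [hF, h3]
        have b := (abs_le.mp (hlow2 y y2)).1
        have c1 : 0 ≤ (y * a2 - 2 * S) * y := mul_nonneg (by linarith) (by linarith)
        have c2 : 0 ≤ a2 * (y ^ 2 - 1) := mul_nonneg h2.le (by nlinarith)
        nlinarith
    · refine ⟨max (max h 1) ((S + 2) / a3), (le_max_left _ _).trans (le_max_left _ _),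
        1, by positivity, fun y hy => ?_⟩
      have y2 : 1 ≤ y := ((le_max_right _ _).trans (le_max_left _ _)).trans hy
      have y3 : (S + 2) / a3 ≤ y := (le_max_right _ _).trans hy
      rw [div_le_iff₀ h3] at y3
      rw [hF]
      have b := (abs_le.mp (hlow y y2)).1
      have c1 : 0 ≤ (y * a3 - (S + 2)) * y ^ 2 := mul_nonneg (by linarith) (sq_nonneg y)
      nlinarith
  obtain ⟨M, hM, c, hc, hcM⟩ := hev
  have hcF : Continuous F := by
    have : F = fun y => f1 + a1 * y + a2 * y ^ 2 + a3 * y ^ 3 := funext hF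
    rw [this]; fun_prop
  have hcq : Continuous fun y => F y / (1 + y ^ 2) :=
    hcF.div (by fun_prop) (fun y => by positivity)
  obtain ⟨m, hm, hmin⟩ := isCompact_Icc.exists_isMinOn (nonempty_Icc.mpr hM)
    (hcq.continuousOn (s := Icc h M))
  have hmp : 0 < F m / (1 + m ^ 2) := div_pos (hpos m hm.1) (by positivity)
  refine ⟨min c (F m / (1 + m ^ 2)), lt_min hc hmp, fun y hy => ?_⟩
  have hy2 : 0 < 1 + y ^ 2 := by positivity
  rcases le_total M y with hMy | hMy
  · exact (mul_le_mul_of_nonneg_right (min_le_left _ _) hy2.le).trans (hcM y hMy)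
  · have := hmin (show y ∈ Icc h M from ⟨hy, hMy⟩)
    simp only [mem_ofPred_eq] at this
    rw [← le_div_iff₀ hy2]
    exact (min_le_right _ _).trans this

lemma aux_blowup (F : ℝ → ℝ) (h c : ℝ) (hc : 0 < c)
    (hlow : ∀ y, h ≤ y → c * (1 + y ^ 2) ≤ F y)
    (u : ℝ → ℝ) (hu0 : u 0 = h)
    (hu : ∀ t ∈ Icc (0:ℝ) (Real.pi / c), HasDerivWithinAt u (F (u t)) (Icc 0 (Real.pi / c)) t) :
    False := by
  set T := Real.pi / c with hTdef
  have hT : 0 < T := by have := Real.pi_pos; positivity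
  have hge : ∀ t ∈ Icc (0:ℝ) T, -u t ≤ -h := by
    refine image_le_of_deriv_right_lt_deriv_boundary (f := fun t => -u t)
      (f' := fun t => - F (u t)) (B := fun _ => -h) (B' := fun _ => 0)
      (fun t ht => (hu t ht).neg.continuousWithinAt)
      (fun x hx => ((hu x ⟨hx.1, hx.2.le⟩).neg).mono_of_mem_nhdsWithin
        (Icc_mem_nhdsGE_of_mem hx)) (by simp [hu0]) (fun x => hasDerivAt_const x _) ?_
    intro x hx hxe
    have e : u x = h := by simpa using hxe
    have := hlow h le_rfl
    have : 0 < c * (1 + h ^ 2) := by positivity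
    rw [e]; linarith
  have hder : ∀ t ∈ Icc (0:ℝ) T, HasDerivWithinAt (fun t => Real.arctan (u t) - c * t)
      (1 / (1 + u t ^ 2) * F (u t) - c) (Icc 0 T) t := by
    intro t ht
    have h2 := ((hasDerivAt_id t).const_mul c).hasDerivWithinAt (s := Icc 0 T)
    have := (hu t ht).arctan.sub h2
    refine this.congr_deriv ?_
    simp
  have hmono : MonotoneOn (fun t => Real.arctan (u t) - c * t) (Icc 0 T) := by
    refine monotoneOn_of_hasDerivWithinAt_nonneg (convex_Icc 0 T)
      (fun t ht => (hder t ht).continuousWithinAt)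
      (fun t ht => (hder t (interior_subset ht)).mono interior_subset) ?_
    intro t ht
    have h1 := hlow (u t) (by linarith [hge t (interior_subset ht)])
    have h2 : 0 < 1 + u t ^ 2 := by positivity
    have : c ≤ F (u t) / (1 + u t ^ 2) := (le_div_iff₀ h2).mpr h1
    have e : 1 / (1 + u t ^ 2) * F (u t) = F (u t) / (1 + u t ^ 2) := by ring
    rw [e]; linarith
  have := hmono (left_mem_Icc.mpr hT.le) (right_mem_Icc.mpr hT.le) hT.le
  simp only at this
  have e : c * T = Real.pi := by rw [hTdef]; field_simp
  rw [e] at this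
  have a1 := Real.arctan_lt_pi_div_two (u T)
  have a2 := Real.neg_pi_div_two_lt_arctan (u 0)
  linarith

lemma aux_no (f1 a1 a2 a3 h : ℝ) (F : ℝ → ℝ)
    (hF : ∀ y : ℝ, F y = f1 + a1 * y + a2 * y ^ 2 + a3 * y ^ 3)
    (hp : 0 < F h) (hz : ∀ z, h ≤ z → F z ≠ 0) (hne : ¬ (a3 = 0 ∧ a2 = 0))
    (hex : ∀ T : ℝ, 0 < T → ∃ u : ℝ → ℝ, u 0 = h ∧
      ∀ t ∈ Icc (0:ℝ) T, HasDerivWithinAt u (F (u t)) (Icc 0 T) t) : False := by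
  have hcF : Continuous F := by
    have : F = fun y => f1 + a1 * y + a2 * y ^ 2 + a3 * y ^ 3 := funext hF
    rw [this]; fun_prop
  have hpos : ∀ y, h ≤ y → 0 < F y := by
    intro y hy
    by_contra hn
    obtain ⟨z, hz1, hz2⟩ := intermediate_value_Icc' hy hcF.continuousOn
      (show (0:ℝ) ∈ Icc (F y) (F h) from ⟨not_lt.mp hn, hp.le⟩)
    exact hz z hz1.1 hz2
  obtain ⟨c, hc, hlow⟩ := aux_lower f1 a1 a2 a3 h F hF hpos hne
  obtain ⟨u, hu0, hu⟩ := hex (Real.pi / c) (by have := Real.pi_pos; positivity)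
  exact aux_blowup F h c hc hlow u hu0 hu

/-- Characterization of global solvability of the backward ODE with cubic
generator (Theorem 5.3). -/
theorem stmt1
    (f1 a1 a2 a3 h : ℝ) (F : ℝ → ℝ)
    (hF : ∀ y : ℝ, F y = f1 + a1 * y + a2 * y ^ 2 + a3 * y ^ 3) :
    (∀ T : ℝ, 0 < T → ∃ y : ℝ → ℝ, ContinuousOn y (Icc 0 T) ∧
        ∀ t ∈ Icc (0:ℝ) T, y t = h + ∫ s in t..T, F (y s)) ↔
      ((0 ≤ F h ∧ ∃ z : ℝ, h ≤ z ∧ F z = 0) ∨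
       (F h ≤ 0 ∧ ∃ z : ℝ, z ≤ h ∧ F z = 0) ∨
       (a3 = 0 ∧ a2 = 0)) := by
  have hFe : F = fun y => f1 + a1 * y + a2 * y ^ 2 + a3 * y ^ 3 := funext hF
  have hcd : ContDiff ℝ 1 F := by rw [hFe]; fun_prop
  have hc : Continuous F := hcd.continuous
  constructor
  · intro H
    have hex : ∀ T : ℝ, 0 < T → ∃ u : ℝ → ℝ, u 0 = h ∧
        ∀ t ∈ Icc (0:ℝ) T, HasDerivWithinAt u (F (u t)) (Icc 0 T) t := by
      intro T hT
      obtain ⟨y, hy, hyt⟩ := H T hT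
      exact aux_forward F y hc h T hT hy hyt
    by_contra hB
    push Not at hB
    obtain ⟨hB1, hB2, hB3⟩ := hB
    rcases lt_trichotomy (F h) 0 with hh | hh | hh
    · refine aux_no (-f1) a1 (-a2) a3 (-h) (fun y => - F (-y)) (fun y => ?_) ?_ ?_ ?_ ?_
      · rw [hF]; ring
      · simpa using hh
      · intro z hz hz0
        exact hB2 hh.le (-z) (by linarith) (by simpa using hz0)
      · rintro ⟨e1, e2⟩
        exact hB3 e1 (by linarith)
      · intro T hT
        obtain ⟨u, hu0, hu⟩ := hex T hT
        refine ⟨fun t => - u t, by simp [hu0], fun t ht => ?_⟩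
        refine (hu t ht).neg.congr_deriv ?_
        simp
    · exact hB1 hh.ge h le_rfl hh
    · exact aux_no f1 a1 a2 a3 h F hF hh (fun z hz => hB1 hh.le z hz)
        (fun e => hB3 e.1 e.2) hex
  · rintro (⟨h1, z, hz, hz0⟩ | ⟨h1, z, hz, hz0⟩ | ⟨h3, h2⟩) T hT
    · obtain ⟨u, hu0, hu⟩ := aux_exists F hcd h h z T hT le_rfl hz h1 hz0.le
      exact aux_of_forward F u hc h T hT hu0 hu
    · obtain ⟨u, hu0, hu⟩ := aux_exists F hcd h z h T hT hz le_rfl hz0.ge h1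
      exact aux_of_forward F u hc h T hT hu0 hu
    · obtain ⟨u, hu0, hu⟩ := aux_lin f1 a1 h
      refine aux_of_forward F u hc h T hT hu0 (fun t _ => ?_)
      have : F (u t) = f1 + a1 * u t := by rw [hF, h3, h2]; ring
      rw [this]
      exact (hu t).hasDerivWithinAt
end

section
/- Let f₁, a₁, a₂, a₃, h ∈ ℝ and define the cubic polynomial F(y) = f₁ + a₁y + a₂y² + a₃y³. If a₃ < 0 or F(h) = 0, then for every T > 0 there exists a continuous function y : [0,T] → ℝ with y(t) = h + ∫_t^T F(y(s)) ds for all t ∈ [0,T]. -/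
open MeasureTheory Set

/-- Sufficient condition for global solvability of the backward ODE with cubic
generator (Theorem 5.4 (i)). -/
theorem stmt2
    (f1 a1 a2 a3 h : ℝ) (F : ℝ → ℝ)
    (hF : ∀ y : ℝ, F y = f1 + a1 * y + a2 * y ^ 2 + a3 * y ^ 3)
    (hcond : a3 < 0 ∨ F h = 0) :
    ∀ T : ℝ, 0 < T → ∃ y : ℝ → ℝ, ContinuousOn y (Icc 0 T) ∧
      ∀ t ∈ Icc (0:ℝ) T, y t = h + ∫ s in t..T, F (y s) := by
  intro T hT
  rcases hcond with ha | h0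
  swap
  · exact ⟨fun _ => h, continuousOn_const, fun t _ => by simp [h0]⟩
  have hFc : Continuous F := by
    have : F = fun y => f1 + a1 * y + a2 * y ^ 2 + a3 * y ^ 3 := funext hF
    rw [this]; fun_prop
  obtain ⟨M, hM1, hMh, hM⟩ : ∃ M : ℝ, 1 ≤ M ∧ |h| ≤ M ∧ |f1| + |a1| + |a2| + a3 * M < 0 := by
    refine ⟨1 + |h| + (|f1| + |a1| + |a2|) / (-a3), ?_, ?_, ?_⟩
    · have : 0 ≤ (|f1| + |a1| + |a2|) / (-a3) := div_nonneg (by positivity) (by linarith)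
      have := abs_nonneg h
      linarith
    · have : 0 ≤ (|f1| + |a1| + |a2|) / (-a3) := div_nonneg (by positivity) (by linarith)
      linarith
    · have e : a3 * ((|f1| + |a1| + |a2|) / (-a3)) = -(|f1| + |a1| + |a2|) := by
        have := ha.ne
        field_simp
      have := abs_nonneg h
      nlinarith
  have hM0 : 0 < M := by linarith
  have b1 : |f1| ≤ |f1| * M ^ 2 := by
    have : 1 ≤ M ^ 2 := by nlinarith
    nlinarith [abs_nonneg f1]
  have b2 : |a1| * M ≤ |a1| * M ^ 2 := by
    have : M ≤ M ^ 2 := by nlinarith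
    nlinarith [abs_nonneg a1]
  have b3 : (|f1| + |a1| + |a2| + a3 * M) * M ^ 2 < 0 := mul_neg_of_neg_of_pos hM (by positivity)
  have c1 : a1 * M ≤ |a1| * M := mul_le_mul_of_nonneg_right (le_abs_self _) hM0.le
  have c2 : -a1 * M ≤ |a1| * M := mul_le_mul_of_nonneg_right (neg_le_abs _) hM0.le
  have c3 : a2 * M ^ 2 ≤ |a2| * M ^ 2 := mul_le_mul_of_nonneg_right (le_abs_self _) (by positivity)
  have c4 : -a2 * M ^ 2 ≤ |a2| * M ^ 2 := mul_le_mul_of_nonneg_right (neg_le_abs _) (by positivity)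
  have hFM : F M < 0 := by
    rw [hF]; nlinarith [le_abs_self f1]
  have hFM' : 0 < F (-M) := by
    rw [hF]; nlinarith [neg_le_abs f1]
  have hMM : -M ≤ M := by linarith
  set p : ℝ → ℝ := fun x => (projIcc (-M) M hMM x : ℝ) with hp
  have hpm : ∀ x, p x ∈ Icc (-M) M := fun x => (projIcc (-M) M hMM x).2
  have hpl : ∀ x y, |p x - p y| ≤ |x - y| := fun x y => by
    have := (LipschitzWith.projIcc hMM).dist_le_mul x y
    simpa [Subtype.dist_eq, Real.dist_eq] using this
  have hpid : ∀ x ∈ Icc (-M) M, p x = x := fun x hx => by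
    simp [hp, projIcc_of_mem hMM hx]
  set K : ℝ := |a1| + |a2| * (2 * M) + |a3| * (3 * M ^ 2) with hK
  have hK0 : 0 ≤ K := by positivity
  have hFl : ∀ u ∈ Icc (-M) M, ∀ v ∈ Icc (-M) M, |F u - F v| ≤ K * |u - v| := by
    intro u hu v hv
    have hu' : |u| ≤ M := abs_le.2 hu
    have hv' : |v| ≤ M := abs_le.2 hv
    have e : F u - F v = (a1 + a2 * (u + v) + a3 * (u ^ 2 + u * v + v ^ 2)) * (u - v) := by
      rw [hF, hF]; ring
    rw [e, abs_mul]
    refine mul_le_mul_of_nonneg_right ?_ (abs_nonneg _)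
    have k1 : |u + v| ≤ 2 * M := (abs_add_le _ _).trans (by linarith)
    have k2 : |u ^ 2 + u * v + v ^ 2| ≤ 3 * M ^ 2 := by
      refine (abs_add_three _ _ _).trans ?_
      rw [abs_mul, abs_pow, abs_pow]
      nlinarith [abs_nonneg u, abs_nonneg v]
    refine (abs_add_three _ _ _).trans ?_
    rw [abs_mul, abs_mul, hK]
    gcongr
  set G : ℝ → ℝ := fun x => F (p x) with hG
  set L : ℝ := |F 0| + K * M with hL
  have hL0 : 0 ≤ L := by positivity
  have hGb : ∀ x, |G x| ≤ L := by
    intro x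
    have h1 := hFl (p x) (hpm x) 0 ⟨by linarith, hM0.le⟩
    have h2 : |p x - 0| ≤ M := by rw [sub_zero]; exact abs_le.2 (hpm x)
    have h3 : |F (p x)| ≤ |F (p x) - F 0| + |F 0| := by
      simpa using abs_add_le (F (p x) - F 0) (F 0)
    have h4 := mul_le_mul_of_nonneg_left h2 hK0
    show |F (p x)| ≤ L
    linarith
  have hGl : LipschitzWith K.toNNReal G := by
    refine LipschitzWith.of_dist_le_mul fun x y => ?_
    rw [Real.dist_eq, Real.dist_eq, Real.coe_toNNReal _ hK0]
    exact (hFl _ (hpm x) _ (hpm y)).trans (mul_le_mul_of_nonneg_left (hpl x y) hK0)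
  have hPL : IsPicardLindelof (fun _ => G) (tmin := 0) (tmax := T) ⟨0, le_rfl, hT.le⟩ h
      (L * T).toNNReal 0 L.toNNReal K.toNNReal := by
    refine IsPicardLindelof.of_time_independent (fun x _ => ?_) hGl.lipschitzOnWith ?_
    · rw [Real.coe_toNNReal _ hL0]; exact hGb x
    · rw [Real.coe_toNNReal _ hL0, Real.coe_toNNReal _ (by positivity)]
      simp [hT.le]
  obtain ⟨z, hz0, hz⟩ := hPL.exists_eq_forall_mem_Icc_hasDerivWithinAt₀
  simp only at hz0 hz
  have hzc : ContinuousOn z (Icc 0 T) := HasDerivWithinAt.continuousOn hz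
  have hzr : ∀ x ∈ Ico 0 T, HasDerivWithinAt z (G (z x)) (Ici x) x := fun x hx =>
    (hz x ⟨hx.1, hx.2.le⟩).mono_of_mem_nhdsWithin (Icc_mem_nhdsGE_of_mem hx)
  have hh := abs_le.1 hMh
  have up : ∀ ⦃x⦄, x ∈ Icc 0 T → z x ≤ M :=
    image_le_of_deriv_right_lt_deriv_boundary (B := fun _ => M) (B' := fun _ => 0) hzc hzr
      (by rw [hz0]; exact hh.2) (fun x => hasDerivAt_const x M) (fun x _ e => by
        simp only [hG, e, hpid M ⟨hMM, le_rfl⟩]; exact hFM)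
  have lo : ∀ ⦃x⦄, x ∈ Icc 0 T → -z x ≤ M :=
    image_le_of_deriv_right_lt_deriv_boundary (f := fun x => -z x) (B := fun _ => M)
      (B' := fun _ => 0) hzc.neg (fun x hx => (hzr x hx).neg)
      (by rw [hz0]; linarith [hh.1]) (fun x => hasDerivAt_const x M) (fun x _ e => by
        have e' : z x = -M := by linarith
        simp only [hG, e', hpid (-M) ⟨le_rfl, hMM⟩]; linarith)
  have hGF : ∀ x ∈ Icc 0 T, G (z x) = F (z x) := fun x hx => by
    simp only [hG]; rw [hpid (z x) ⟨by linarith [lo hx], up hx⟩]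
  refine ⟨fun t => z (T - t), ?_, ?_⟩
  · exact hzc.comp (by fun_prop) (fun t ht => ⟨by linarith [ht.2], by linarith [ht.1]⟩)
  · intro t ht
    have hs : Icc 0 (T - t) ⊆ Icc 0 T := Icc_subset_Icc le_rfl (by linarith [ht.1])
    have h0 : 0 ≤ T - t := by linarith [ht.2]
    have := intervalIntegral.integral_eq_sub_of_hasDeriv_right_of_le h0 (hzc.mono hs)
      (f' := fun s => F (z s))
      (fun x hx => by
        have hx' : x ∈ Ico 0 T := ⟨hx.1.le, by linarith [hx.2, ht.1]⟩
        have := hzr x hx'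
        rw [hGF x ⟨hx'.1, hx'.2.le⟩] at this
        exact this.mono Ioi_subset_Ici_self)
      (ContinuousOn.intervalIntegrable (by
        rw [uIcc_of_le h0]; exact hFc.comp_continuousOn (hzc.mono hs)))
    have e := intervalIntegral.integral_comp_sub_left (a := t) (b := T) (fun s => F (z s)) T
    rw [sub_self] at e
    show z (T - t) = h + ∫ s in t..T, F (z (T - s))
    rw [e, this, hz0]; ring
end

section
/- For every T > 0 and K > 0 there exist constants ε > 0 and C > 0, depending only on T and K, with the following property: whenever f₁, a₁, a₂, a₃, h ∈ ℝ satisfy |f₁| ≤ K, |a₁| ≤ K, |h| ≤ K, a₃ ≤ ε, a₂ ≤ ε, and F(h) > 0 where F(y) = f₁ + a₁y + a₂y² + a₃y³, the backward ODE admits a continuous solution y : [0,T] → ℝ with y(t) = h + ∫_t^T F(y(s)) ds and h ≤ y(t) ≤ C for all t ∈ [0,T]. -/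
open MeasureTheory Set

theorem aux_lip (f1 a1 a2 a3 M x y : ℝ) (hx : |x| ≤ M) (hy : |y| ≤ M) :
    |(f1 + a1 * x + a2 * x ^ 2 + a3 * x ^ 3) - (f1 + a1 * y + a2 * y ^ 2 + a3 * y ^ 3)|
      ≤ (|a1| + |a2| * (M + M) + |a3| * (M * M + M * M + M * M)) * |x - y| := by
  have e : (f1 + a1 * x + a2 * x ^ 2 + a3 * x ^ 3) - (f1 + a1 * y + a2 * y ^ 2 + a3 * y ^ 3)
      = (a1 + a2 * (x + y) + a3 * (x * x + x * y + y * y)) * (x - y) := by ring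
  have hM : 0 ≤ M := (abs_nonneg _).trans hx
  rw [e, abs_mul]
  gcongr
  refine (abs_add_three _ _ _).trans ?_
  rw [abs_mul, abs_mul]
  gcongr
  · exact (abs_add_le _ _).trans (by gcongr)
  · refine (abs_add_three _ _ _).trans ?_
    rw [abs_mul, abs_mul, abs_mul]
    gcongr

theorem aux_bdd (f1 a1 a2 a3 M x : ℝ) (hx : |x| ≤ M) :
    |f1 + a1 * x + a2 * x ^ 2 + a3 * x ^ 3|
      ≤ |f1| + |a1| * M + |a2| * M ^ 2 + |a3| * M ^ 3 := by
  have hM : 0 ≤ M := (abs_nonneg _).trans hx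
  refine (abs_add_le _ _).trans ?_
  refine (add_le_add_left (abs_add_three _ _ _) _).trans ?_
  rw [abs_mul, abs_mul, abs_mul, abs_pow, abs_pow]
  gcongr

theorem aux_exists_s3 (G : ℝ → ℝ) (T h : ℝ) (hT : 0 < T) (L M : NNReal)
    (hL : LipschitzWith L G) (hM : ∀ x, ‖G x‖ ≤ M) :
    ∃ u : ℝ → ℝ, u 0 = h ∧ ∀ t ∈ Icc 0 T, HasDerivWithinAt u (G (u t)) (Icc 0 T) t := by
  have hp : IsPicardLindelof (fun _ => G) (⟨0, left_mem_Icc.2 hT.le⟩ : Icc (0:ℝ) T) h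
      (M * T.toNNReal) 0 M L := by
    refine ⟨fun t _ => hL.lipschitzOnWith, fun x _ => continuousOn_const,
      fun t _ x _ => hM x, ?_⟩
    simp [hT.le]
  exact hp.exists_eq_forall_mem_Icc_hasDerivWithinAt₀

/-- Bounded solutions on a fixed horizon for cubic generators with small
nonlinear coefficients, case `F(h) > 0` (Theorem 5.4 (ii)). -/
theorem stmt3 :
    ∀ T : ℝ, 0 < T → ∀ K : ℝ, 0 < K →
      ∃ ε : ℝ, 0 < ε ∧ ∃ C : ℝ, 0 < C ∧
        ∀ f1 a1 a2 a3 h : ℝ,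
          |f1| ≤ K → |a1| ≤ K → |h| ≤ K → a3 ≤ ε → a2 ≤ ε →
          0 < f1 + a1 * h + a2 * h ^ 2 + a3 * h ^ 3 →
          ∃ y : ℝ → ℝ, ContinuousOn y (Icc 0 T) ∧
            ∀ t ∈ Icc (0:ℝ) T,
              (y t = h + ∫ s in t..T,
                (f1 + a1 * y s + a2 * (y s) ^ 2 + a3 * (y s) ^ 3)) ∧
              h ≤ y t ∧ y t ≤ C := by
  intro T hT K hK
  obtain ⟨C, hC⟩ : ∃ C, C = (K + 3) * Real.exp (K * T) := ⟨_, rfl⟩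
  have hCK : K + 3 ≤ C := by
    rw [hC]
    have : 1 ≤ Real.exp (K * T) := Real.one_le_exp (by positivity)
    nlinarith
  have hC0 : 0 < C := by linarith
  refine ⟨K / (C ^ 2 + C ^ 3), by positivity, C, hC0, ?_⟩
  intro f1 a1 a2 a3 h hf1 ha1 hh ha3 ha2 hF
  obtain ⟨ε, hε⟩ : ∃ ε, ε = K / (C ^ 2 + C ^ 3) := ⟨_, rfl⟩
  rw [← hε] at ha3 ha2
  have hε0 : 0 < ε := by rw [hε]; positivity
  have hεK : ε * (C ^ 2 + C ^ 3) = K := by rw [hε]; field_simp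
  have hhK := abs_le.1 hh
  set F : ℝ → ℝ := fun x => f1 + a1 * x + a2 * x ^ 2 + a3 * x ^ 3 with hFdef
  set c : ℝ → ℝ := fun x => max h (min C x) with hc
  have hcl : ∀ x, |c x| ≤ C := fun x => by
    rw [abs_le]
    exact ⟨by linarith [le_max_left h (min C x)],
      max_le (by linarith) (min_le_left _ _)⟩
  have hcid : ∀ x, h ≤ x → x ≤ C → c x = x := fun x h1 h2 => by
    simp [hc, h1, h2]
  have hclip : LipschitzWith 1 c := (LipschitzWith.id.const_min _).const_max _
  have hGlip : LipschitzWith (|a1| + |a2| * (C + C) + |a3| * (C * C + C * C + C * C)).toNNReal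
      (fun x => F (c x)) := by
    refine LipschitzWith.of_dist_le_mul fun x y => ?_
    rw [Real.coe_toNNReal _ (by positivity), Real.dist_eq, Real.dist_eq]
    refine (aux_lip f1 a1 a2 a3 C _ _ (hcl x) (hcl y)).trans ?_
    refine mul_le_mul_of_nonneg_left ?_ (by positivity)
    simpa [Real.dist_eq] using hclip.dist_le_mul x y
  have hGb : ∀ x, ‖F (c x)‖ ≤
      ((|f1| + |a1| * C + |a2| * C ^ 2 + |a3| * C ^ 3).toNNReal : NNReal) := fun x => by
    rw [Real.coe_toNNReal _ (by positivity)]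
    exact aux_bdd f1 a1 a2 a3 C _ (hcl x)
  obtain ⟨u, hu0, hu⟩ := aux_exists_s3 (fun x => F (c x)) T h hT _ _ hGlip hGb
  have hucont : ContinuousOn u (Icc 0 T) := fun t ht => (hu t ht).continuousWithinAt
  have hur : ∀ t ∈ Ico 0 T, HasDerivWithinAt u (F (c (u t))) (Ici t) t := fun t ht =>
    (hu t ⟨ht.1, ht.2.le⟩).mono_of_mem_nhdsWithin (Icc_mem_nhdsGE_of_mem ht)
  have hlow : ∀ t ∈ Icc 0 T, h ≤ u t := fun t ht => by
    have := image_le_of_deriv_right_lt_deriv_boundary (f := fun t => - u t)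
      (f' := fun t => - F (c (u t))) (a := 0) (b := T) (B := fun _ => -h) (B' := fun _ => 0)
      hucont.neg (fun t ht => (hur t ht).neg) (by simp [hu0]) (fun x => hasDerivAt_const _ _)
      (fun x _ hx => by
        have hx : u x = h := neg_injective hx
        rw [hx, hcid h le_rfl (by linarith)]
        exact neg_neg_of_pos hF) ht
    exact neg_le_neg_iff.1 this
  have hup' : ∀ t ∈ Icc 0 T, u t ≤ (K + 3) * Real.exp (K * t) - 3 := fun t ht => by
    refine image_le_of_deriv_right_lt_deriv_boundary (f := u)
      (f' := fun t => F (c (u t))) (a := 0) (b := T)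
      (B := fun t => (K + 3) * Real.exp (K * t) - 3)
      (B' := fun t => (K + 3) * (Real.exp (K * t) * K))
      hucont hur (by simp [hu0]; linarith) (fun x => ?_) (fun x hx he => ?_) ht
    · have h1 : HasDerivAt (fun t => K * t) K x := by
        simpa using (hasDerivAt_id x).const_mul K
      exact (h1.exp.const_mul (K + 3)).sub_const 3
    · have he1 : 1 ≤ Real.exp (K * x) := Real.one_le_exp (mul_nonneg hK.le hx.1)
      have he2 : Real.exp (K * x) ≤ Real.exp (K * T) := by
        have := hx.2.le
        gcongr
      have hux0 : 0 ≤ u x := by rw [he]; nlinarith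
      have huxh : h ≤ u x := by rw [he]; nlinarith
      have huxC : u x ≤ C := by rw [he, hC]; nlinarith
      rw [hcid _ huxh huxC]
      have e : (K + 3) * (Real.exp (K * x) * K) = K * (u x + 3) := by rw [he]; ring
      rw [e]
      have b1 : a1 * u x ≤ K * u x := by
        gcongr; exact (abs_le.1 ha1).2
      have b2 : a2 * u x ^ 2 ≤ ε * C ^ 2 := by
        calc a2 * u x ^ 2 ≤ ε * u x ^ 2 := by gcongr
          _ ≤ _ := by gcongr
      have b3 : a3 * u x ^ 3 ≤ ε * C ^ 3 := by
        calc a3 * u x ^ 3 ≤ ε * u x ^ 3 := by gcongr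
          _ ≤ _ := by gcongr
      have := (abs_le.1 hf1).2
      simp only [hFdef]
      nlinarith
  have hup : ∀ t ∈ Icc 0 T, u t ≤ C := fun t ht => by
    have he2 : Real.exp (K * t) ≤ Real.exp (K * T) := by
      have := ht.2
      gcongr
    have := hup' t ht
    rw [hC]; nlinarith
  refine ⟨fun t => u (T - t), hucont.comp (by fun_prop)
    (fun t ht => ⟨by linarith [ht.2], by linarith [ht.1]⟩), fun t ht => ?_⟩
  have ht' : T - t ∈ Icc 0 T := ⟨by linarith [ht.2], by linarith [ht.1]⟩
  refine ⟨?_, hlow _ ht', hup _ ht'⟩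
  have hs : ∫ s in t..T, F (u (T - s)) = ∫ s in (0:ℝ)..(T - t), F (u s) := by
    rw [intervalIntegral.integral_comp_sub_left (fun s => F (u s)) T, sub_self]
  have hsub : Icc 0 (T - t) ⊆ Icc 0 T := Icc_subset_Icc_right ht'.2
  have hFc : Continuous F := by fun_prop
  have hi : ∫ s in (0:ℝ)..(T - t), F (u s) = u (T - t) - u 0 := by
    refine intervalIntegral.integral_eq_sub_of_hasDeriv_right_of_le ht'.1
      (hucont.mono hsub) (fun x hx => ?_) ?_
    · have hx' : x ∈ Icc 0 T := hsub ⟨hx.1.le, hx.2.le⟩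
      have := hur x ⟨hx.1.le, hx.2.trans_le ht'.2⟩
      rw [hcid _ (hlow x hx') (hup x hx')] at this
      exact this.mono Ioi_subset_Ici_self
    · refine ContinuousOn.intervalIntegrable ?_
      rw [uIcc_of_le ht'.1]
      exact hFc.comp_continuousOn (hucont.mono hsub)
  change u (T - t) = h + ∫ s in t..T, F (u (T - s))
  rw [hs, hi, hu0]; ring
end

section
/- For every T > 0 and K > 0 there exist constants ε > 0 and C > 0, depending only on T and K, with the following property: whenever f₁, a₁, a₂, a₃, h ∈ ℝ satisfy |f₁| ≤ K, |a₁| ≤ K, |h| ≤ K, a₃ ≤ ε, a₂ ≥ −ε, and F(h) < 0 where F(y) = f₁ + a₁y + a₂y² + a₃y³, the backward ODE admits a continuous solution y : [0,T] → ℝ with y(t) = h + ∫_t^T F(y(s)) ds and −C ≤ y(t) ≤ h for all t ∈ [0,T]. -/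
open MeasureTheory Set

/-- Solution of the truncated equation. -/
lemma exists_trunc_sol (F : ℝ → ℝ) (hF : ContDiff ℝ 1 F) (T l h : ℝ) (hT : 0 < T) (hlh : l ≤ h) :
    ∃ z : ℝ → ℝ, z 0 = h ∧ ∀ t ∈ Icc (0:ℝ) T,
      HasDerivWithinAt z (F (projIcc l h hlh (z t))) (Icc 0 T) t := by
  obtain ⟨k, hk⟩ := (hF.locallyLipschitz.locallyLipschitzOn
    (s := Icc l h)).exists_lipschitzOnWith_of_compact isCompact_Icc
  obtain ⟨M, hM⟩ := isCompact_Icc.exists_bound_of_continuousOn (hF.continuous.continuousOn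
    (s := Icc l h))
  have hM0 : 0 ≤ M := (norm_nonneg _).trans (hM l (left_mem_Icc.2 hlh))
  have hlip : LipschitzWith (k * 1) (fun x : ℝ => F (projIcc l h hlh x)) :=
    (lipschitzOnWith_iff_restrict.1 hk).comp (LipschitzWith.projIcc hlh)
  have hPL : IsPicardLindelof (fun _ x => F (projIcc l h hlh x))
      (⟨0, left_mem_Icc.2 hT.le⟩ : Icc (0:ℝ) T) h (Real.toNNReal (M * T)) 0 (Real.toNNReal M)
      (k * 1) := by
    refine IsPicardLindelof.of_time_independent ?_ hlip.lipschitzOnWith ?_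
    · intro x _
      rw [Real.coe_toNNReal _ hM0]
      exact hM _ (projIcc l h hlh x).2
    · rw [Real.coe_toNNReal _ hM0, Real.coe_toNNReal _ (by positivity)]
      simp [hT.le]
  obtain ⟨z, hz0, hz⟩ := hPL.exists_eq_forall_mem_Icc_hasDerivWithinAt₀
  exact ⟨z, hz0, hz⟩

/-- Bounded solutions on a fixed horizon for cubic generators with small
nonlinear coefficients, case `F(h) < 0` (Theorem 5.4 (iii)). -/
theorem stmt4 :
    ∀ T : ℝ, 0 < T → ∀ K : ℝ, 0 < K →
      ∃ ε : ℝ, 0 < ε ∧ ∃ C : ℝ, 0 < C ∧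
        ∀ f1 a1 a2 a3 h : ℝ,
          |f1| ≤ K → |a1| ≤ K → |h| ≤ K → a3 ≤ ε → -ε ≤ a2 →
          f1 + a1 * h + a2 * h ^ 2 + a3 * h ^ 3 < 0 →
          ∃ y : ℝ → ℝ, ContinuousOn y (Icc 0 T) ∧
            ∀ t ∈ Icc (0:ℝ) T,
              (y t = h + ∫ s in t..T,
                (f1 + a1 * y s + a2 * (y s) ^ 2 + a3 * (y s) ^ 3)) ∧
              -C ≤ y t ∧ y t ≤ h := by
  intro T hT K hK
  obtain ⟨B, hB⟩ : ∃ B : ℝ → ℝ, B = fun t => (K + 2) * Real.exp ((K + 2) * t) := ⟨_, rfl⟩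
  have hBmono : Monotone B := by
    intro a b hab
    simp only [hB]
    gcongr
  have hB0 : B 0 = K + 2 := by simp [hB]
  have hBd : ∀ x, HasDerivAt B ((K + 2) * B x) x := by
    intro x
    have h1 : HasDerivAt (fun t : ℝ => (K + 2) * t) (K + 2) x := by
      simpa using (hasDerivAt_id x).const_mul (K + 2)
    rw [hB]
    refine (h1.exp.const_mul (K + 2)).congr_deriv ?_
    ring
  obtain ⟨C, hC⟩ : ∃ C, C = B T := ⟨_, rfl⟩
  have hCK : K + 2 ≤ C := by rw [hC, ← hB0]; exact hBmono hT.le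
  have hC0 : 0 < C := by linarith
  refine ⟨1 / (C + C ^ 2), by positivity, C, hC0, ?_⟩
  intro f1 a1 a2 a3 h hf1 ha1 hh ha3 ha2 hneg
  obtain ⟨ε, hε⟩ : ∃ ε, ε = 1 / (C + C ^ 2) := ⟨_, rfl⟩
  rw [← hε] at ha3 ha2
  have hε0 : 0 < ε := by rw [hε]; positivity
  have hεC : ε * (C + C ^ 2) = 1 := by rw [hε]; field_simp
  have hh' := abs_le.1 hh
  have hf1' := abs_le.1 hf1
  have ha1' := abs_le.1 ha1
  have hlh : -C ≤ h := by linarith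
  obtain ⟨F, hF⟩ : ∃ F : ℝ → ℝ, F = fun x => f1 + a1 * x + a2 * x ^ 2 + a3 * x ^ 3 := ⟨_, rfl⟩
  have hFc : ContDiff ℝ 1 F := by rw [hF]; fun_prop
  obtain ⟨z, hz0, hz⟩ := exists_trunc_sol F hFc T (-C) h hT hlh
  have hzc : ContinuousOn z (Icc 0 T) := fun t ht => (hz t ht).continuousWithinAt
  have hzr : ∀ x ∈ Ico 0 T, HasDerivWithinAt z (F (projIcc (-C) h hlh (z x))) (Ici x) x := by
    intro x hx
    exact ((hz x (Ico_subset_Icc_self hx)).mono (Icc_subset_Icc_left hx.1)).mono_of_mem_nhdsWithin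
      (Icc_mem_nhdsGE hx.2)
  have hup : ∀ ⦃x⦄, x ∈ Icc 0 T → z x ≤ h := by
    refine image_le_of_deriv_right_lt_deriv_boundary (B := fun _ => h) (B' := fun _ => 0)
      hzc hzr hz0.le (fun x => hasDerivAt_const x h) ?_
    intro x _ hxh
    rw [projIcc_of_right_le hlh hxh.ge]
    simpa [hF] using hneg
  have hlow : ∀ ⦃x⦄, x ∈ Icc 0 T → -z x ≤ B x := by
    refine image_le_of_deriv_right_lt_deriv_boundary (f := fun x => -z x)
      hzc.neg (fun x hx => (hzr x hx).neg) (by simp only [hz0, hB0]; linarith) hBd ?_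
    intro x hx hxh
    have hb1 : K + 2 ≤ B x := by rw [← hB0]; exact hBmono hx.1
    have hb2 : B x ≤ C := by rw [hC]; exact hBmono hx.2.le
    have hzx : z x = -B x := by linarith
    rw [projIcc_of_mem hlh (x := z x) ⟨by linarith, by linarith⟩]
    simp only [hzx, hF]
    generalize B x = b at hb1 hb2
    have hb0 : 0 < b := by linarith
    have e1 : a1 * b ≤ K * b := by gcongr; exact ha1'.2
    have e2 : -ε * b ^ 2 ≤ a2 * b ^ 2 := by gcongr
    have e3 : a3 * b ^ 3 ≤ ε * b ^ 3 := by gcongr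
    have e4 : ε * b * (b + b ^ 2) ≤ ε * b * (C + C ^ 2) := by gcongr
    have e5 : ε * b * (C + C ^ 2) = b := by linear_combination b * hεC
    nlinarith
  have hlow' : ∀ x ∈ Icc 0 T, -C ≤ z x := by
    intro x hx
    have := hlow hx
    have : B x ≤ C := by rw [hC]; exact hBmono hx.2
    linarith
  have hmem : ∀ t ∈ Icc 0 T, T - t ∈ Icc 0 T := fun t ht => ⟨by linarith [ht.2], by linarith [ht.1]⟩
  refine ⟨fun t => z (T - t), hzc.comp (by fun_prop) hmem, ?_⟩
  intro t ht
  refine ⟨?_, hlow' _ (hmem t ht), hup (hmem t ht)⟩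
  have hsub : Icc 0 (T - t) ⊆ Icc 0 T := Icc_subset_Icc_right (by linarith [ht.1])
  have key : ∫ s in (0:ℝ)..(T - t), F (z s) = z (T - t) - z 0 := by
    refine intervalIntegral.integral_eq_sub_of_hasDeriv_right_of_le (hmem t ht).1
      (hzc.mono hsub) ?_ ?_
    · intro x hx
      have hx' : x ∈ Ico 0 T := ⟨hx.1.le, by linarith [hx.2, ht.1]⟩
      have hx'' := Ico_subset_Icc_self hx'
      have := hzr x hx'
      rw [projIcc_of_mem hlh ⟨hlow' x hx'', hup hx''⟩] at this
      exact this.mono Ioi_subset_Ici_self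
    · apply ContinuousOn.intervalIntegrable
      rw [uIcc_of_le (hmem t ht).1]
      exact hFc.continuous.comp_continuousOn (hzc.mono hsub)
  have key2 := intervalIntegral.integral_comp_sub_left (a := t) (b := T) (fun s => F (z s)) T
  rw [sub_self, key, hz0] at key2
  simp only [hF] at key2
  rw [key2]
  ring
end

section
/- Let T > 0 and let F̲, F̄ : [0,T] × ℝ → ℝ satisfy F̲ ≤ F̄ pointwise, with t ↦ F̄(t,y) and t ↦ F̲(t,y) Lebesgue measurable for each y, and assume that for every M > 0 there exist constants L_M, K_M such that for all t ∈ [0,T] both F̄(t,·) and F̲(t,·) are L_M-Lipschitz on [−M, M] and bounded in absolute value by K_M on [−M, M]. Let h̲ ≤ h̄ be real numbers. Suppose there exist ε > 0 and C > 0 such that F̄(t,y) ≤ −εy³ + C(y² + 1) for all t and all y ≥ 0, and F̲(t,y) ≥ −εy³ − C(y² + 1) for all t and all y ≤ 0. Then there exist constants λ₁ ≤ min(h̲, 0) and λ₂ ≥ max(h̄, 0) such that the two dominating backward ODEs ȳ(t) = h̄ + ∫_t^T F̄(s, ȳ(s)) ds and y̲(t) = h̲ + ∫_t^T F̲(s,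 y̲(s)) ds admit continuous solutions ȳ, y̲ on [0,T] with λ₁ ≤ y̲(t) ≤ λ₂ and λ₁ ≤ ȳ(t) ≤ λ₂ for all t ∈ [0,T]. -/
open MeasureTheory Set

lemma aux_meas (H : ℝ → ℝ → ℝ) (L : ℝ) 
    (hm : ∀ y, Measurable fun t => H t y)
    (hL : ∀ s x y, |H s x - H s y| ≤ L * |x - y|) (v : ℝ → ℝ) (hv : Continuous v) :
    Measurable fun s => H s (v s) := by
  have hc : ∀ s, Continuous (fun y => H s y) := by
    intro s
    refine (LipschitzWith.of_dist_le_mul (K := L.toNNReal) ?_).continuous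
    intro x y
    rw [Real.dist_eq, Real.dist_eq]
    refine (hL s x y).trans ?_
    gcongr
    exact Real.le_coe_toNNReal L
  have h2 : Measurable (Function.uncurry (fun y s => H s y)) :=
    measurable_uncurry_of_continuous_of_measurable (u := fun y s => H s y) hc hm
  exact h2.comp (hv.measurable.prodMk measurable_id)

lemma aux_int (H : ℝ → ℝ → ℝ) (L K : ℝ) 
    (hm : ∀ y, Measurable fun t => H t y)
    (hL : ∀ s x y, |H s x - H s y| ≤ L * |x - y|) (hK : ∀ s y, |H s y| ≤ K)
    (v : ℝ → ℝ) (hv : Continuous v) (a b : ℝ) :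
    IntervalIntegrable (fun s => H s (v s)) volume a b := by
  refine (intervalIntegrable_const (c := K)).mono_fun
    (aux_meas H L hm hL v hv).aestronglyMeasurable ?_
  refine Filter.Eventually.of_forall fun s => ?_
  simp only [Real.norm_eq_abs]
  exact (hK s _).trans (le_abs_self K)

lemma aux_exists_s6 (T : ℝ) (hT : 0 < T) (H : ℝ → ℝ → ℝ) (L K h : ℝ) (hL0 : 0 < L)
    (hm : ∀ y, Measurable fun t => H t y)
    (hL : ∀ s x y, |H s x - H s y| ≤ L * |x - y|) (hK : ∀ s y, |H s y| ≤ K) :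
    ∃ y : ℝ → ℝ, Continuous y ∧ ∀ t ∈ Icc (0:ℝ) T, y t = h + ∫ s in t..T, H s (y s) := by
  let V : C(Icc (0:ℝ) T, ℝ) → ℝ → ℝ := fun u s =>
    Real.exp (2 * L * (T - s)) * u (projIcc 0 T hT.le s)
  have hV : ∀ u, Continuous (V u) := by
    intro u
    have := u.continuous.comp (continuous_projIcc (h := hT.le))
    have h2 : Continuous fun s : ℝ => Real.exp (2 * L * (T - s)) := by fun_prop
    exact h2.mul this
  have hI : ∀ u a b, IntervalIntegrable (fun s => H s (V u s)) volume a b :=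
    fun u a b => aux_int H L K hm hL hK (V u) (hV u) a b
  have hcont : ∀ u, Continuous fun t => ∫ s in t..T, H s (V u s) := by
    intro u
    have h1 := intervalIntegral.continuous_primitive (hI u) T
    have h2 : (fun t => ∫ s in t..T, H s (V u s)) = fun t => -∫ s in T..t, H s (V u s) := by
      funext t
      exact intervalIntegral.integral_symm _ _
    rw [h2]
    exact h1.neg
  let Q : C(Icc (0:ℝ) T, ℝ) → C(Icc (0:ℝ) T, ℝ) := fun u =>
    ⟨fun t => Real.exp (-(2 * L * (T - t))) * (h + ∫ s in (t:ℝ)..T, H s (V u s)), by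
      have := (hcont u).comp (continuous_subtype_val (p := fun x => x ∈ Icc (0:ℝ) T))
      have h2 : Continuous fun t : Icc (0:ℝ) T => Real.exp (-(2 * L * (T - t))) := by fun_prop
      exact h2.mul (continuous_const.add this)⟩
  have hQ : ContractingWith (1/2) Q := by
    refine ⟨by rw [← NNReal.coe_lt_coe]; norm_num, LipschitzWith.of_dist_le_mul fun u v => ?_⟩
    rw [ContinuousMap.dist_le (by positivity)]
    intro t
    have ht : (t:ℝ) ≤ T := t.2.2
    set d := dist u v with hd
    have hd0 : 0 ≤ d := dist_nonneg
    have e1 : Q u t - Q v t = Real.exp (-(2 * L * (T - t))) *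
        ∫ s in (t:ℝ)..T, (H s (V u s) - H s (V v s)) := by
      rw [intervalIntegral.integral_sub (hI u _ _) (hI v _ _)]
      simp only [Q, ContinuousMap.coe_mk]
      ring
    have e2 : ‖∫ s in (t:ℝ)..T, (H s (V u s) - H s (V v s))‖ ≤
        ∫ s in (t:ℝ)..T, L * (Real.exp (2 * L * (T - s)) * d) := by
      refine intervalIntegral.norm_integral_le_of_norm_le ht ?_ ?_
      · refine Filter.Eventually.of_forall fun s _ => ?_
        rw [Real.norm_eq_abs]
        refine (hL _ _ _).trans ?_
        simp only [V]
        rw [← mul_sub, abs_mul, abs_of_pos (Real.exp_pos _), ← Real.dist_eq]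
        gcongr
        exact ContinuousMap.dist_apply_le_dist _
      · apply Continuous.intervalIntegrable
        fun_prop
    have e3 : ∫ s in (t:ℝ)..T, L * (Real.exp (2 * L * (T - s)) * d) =
        d / 2 * (Real.exp (2 * L * (T - t)) - 1) := by
      have : ∀ s ∈ uIcc (t:ℝ) T, HasDerivAt (fun s => -(d/2) * Real.exp (2 * L * (T - s)))
          (L * (Real.exp (2 * L * (T - s)) * d)) s := by
        intro s _
        have h1 : HasDerivAt (fun s : ℝ => 2 * L * (T - s)) (2 * L * (-1)) s :=
          ((hasDerivAt_id s).const_sub T).const_mul (2 * L)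
        refine (h1.exp.const_mul (-(d/2))).congr_deriv ?_
        ring
      rw [intervalIntegral.integral_eq_sub_of_hasDerivAt this
        (by apply Continuous.intervalIntegrable; fun_prop)]
      simp
      ring
    rw [Real.dist_eq, e1, abs_mul, abs_of_pos (Real.exp_pos _)]
    rw [Real.norm_eq_abs, e3] at e2
    have h5 : Real.exp (-(2 * L * (T - t))) * Real.exp (2 * L * (T - t)) = 1 := by
      rw [← Real.exp_add]; simp
    have h6 := mul_le_mul_of_nonneg_left e2 (Real.exp_pos (-(2 * L * (T - t)))).le
    refine h6.trans ?_
    have h7 : 0 ≤ Real.exp (-(2 * L * (T - t))) * (d/2) := by positivity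
    push_cast
    calc _ = (d/2) * (Real.exp (-(2 * L * (T - t))) * Real.exp (2 * L * (T - t)))
          - Real.exp (-(2 * L * (T - t))) * (d/2) := by ring
      _ ≤ _ := by rw [h5]; linarith
  have : Nonempty C(Icc (0:ℝ) T, ℝ) := ⟨0⟩
  let u := ContractingWith.fixedPoint Q hQ
  have hu : Q u = u := hQ.fixedPoint_isFixedPt
  refine ⟨V u, hV u, fun t ht => ?_⟩
  have h1 : Q u ⟨t, ht⟩ = u ⟨t, ht⟩ := by rw [hu]
  have h2 : V u t = Real.exp (2 * L * (T - t)) * u ⟨t, ht⟩ := by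
    simp only [V]; rw [projIcc_of_mem hT.le ht]
  rw [h2, ← h1]
  simp only [Q, ContinuousMap.coe_mk]
  rw [← mul_assoc, ← Real.exp_add]
  simp

/-- Upper invariance. -/
lemma aux_upper_s6 (T : ℝ) (g y : ℝ → ℝ) (h M : ℝ) (hM : h ≤ M) (hy : Continuous y)
    (hg : ∀ a b, IntervalIntegrable g volume a b)
    (heq : ∀ t ∈ Icc (0:ℝ) T, y t = h + ∫ s in t..T, g s)
    (hs : ∀ s, M ≤ y s → g s ≤ 0) : ∀ t ∈ Icc (0:ℝ) T, y t ≤ M := by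
  intro t ht
  by_contra! hlt
  have hyT : y T = h := by
    rw [heq T ⟨ht.1.trans ht.2, le_rfl⟩]; simp
  let S := Icc t T ∩ {s | y s ≤ M}
  have hS : IsCompact S := isCompact_Icc.inter_right (isClosed_le hy continuous_const)
  obtain ⟨r, hr⟩ := hS.exists_isLeast ⟨T, ⟨ht.2, le_rfl⟩, by simpa [hyT] using hM⟩
  have hrS := hr.1
  have h1 : ∀ s ∈ Icc t r, s ≠ r → M ≤ y s := by
    intro s hs hne
    by_contra! hc
    have := hr.2 (show s ∈ S from ⟨⟨hs.1, hs.2.trans hrS.1.2⟩, hc.le⟩)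
    exact hne (le_antisymm hs.2 this)
  have h2 : ∫ s in t..r, g s ≤ 0 := by
    have h0 : ∫ s in t..r, g s ≤ ∫ s in t..r, (0:ℝ) := by
      refine intervalIntegral.integral_mono_on_of_le_Ioo hrS.1.1 (hg _ _) (by simp) ?_
      intro s hs'
      exact hs s (h1 s ⟨hs'.1.le, hs'.2.le⟩ hs'.2.ne)
    simpa using h0
  have h3 := heq t ht
  have h4 := heq r ⟨ht.1.trans hrS.1.1, hrS.1.2⟩
  have h5 := intervalIntegral.integral_add_adjacent_intervals (hg t r) (hg r T)
  have h6 : y r ≤ M := hrS.2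
  linarith

lemma aux_main (T : ℝ) (hT : 0 < T) (F : ℝ → ℝ → ℝ) (hm : ∀ y, Measurable fun t => F t y)
    (M L K h : ℝ) (hM : 0 < M) (hh : |h| ≤ M)
    (hL : ∀ t ∈ Icc (0:ℝ) T, LipschitzOnWith (Real.toNNReal L) (fun y => F t y) (Icc (-M) M))
    (hK : ∀ t ∈ Icc (0:ℝ) T, ∀ y ∈ Icc (-M) M, |F t y| ≤ K)
    (hup : ∀ t ∈ Icc (0:ℝ) T, F t M ≤ 0) (hlo : ∀ t ∈ Icc (0:ℝ) T, 0 ≤ F t (-M)) :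
    ∃ y : ℝ → ℝ, ContinuousOn y (Icc 0 T) ∧
      (∀ t ∈ Icc (0:ℝ) T, y t = h + ∫ s in t..T, F s (y s)) ∧
      ∀ t ∈ Icc (0:ℝ) T, -M ≤ y t ∧ y t ≤ M := by
  have hMM : -M ≤ M := by linarith
  let H : ℝ → ℝ → ℝ := fun t y => (Icc (0:ℝ) T).indicator (fun t => F t (projIcc (-M) M hMM y)) t
  have Hin : ∀ t ∈ Icc (0:ℝ) T, ∀ y, H t y = F t (projIcc (-M) M hMM y) :=
    fun t ht y => indicator_of_mem ht _
  have Hout : ∀ t ∉ Icc (0:ℝ) T, ∀ y, H t y = 0 :=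
    fun t ht y => indicator_of_notMem ht _
  have Hm : ∀ y, Measurable fun t => H t y := fun y =>
    (hm _).indicator measurableSet_Icc
  let L' := max L 0 + 1
  have hL' : 0 < L' := by positivity
  have HL : ∀ s x y, |H s x - H s y| ≤ L' * |x - y| := by
    intro s x y
    by_cases hs : s ∈ Icc (0:ℝ) T
    · rw [Hin s hs, Hin s hs]
      have h1 := (hL s hs).dist_le_mul _ (projIcc (-M) M hMM x).2 _ (projIcc (-M) M hMM y).2
      have h2 : dist (projIcc (-M) M hMM x : ℝ) (projIcc (-M) M hMM y) ≤ |x - y| := by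
        have := abs_projIcc_sub_projIcc (c := x) (d := y) hMM
        simpa [Real.dist_eq] using this
      rw [← Real.dist_eq]
      refine h1.trans ?_
      gcongr
      rw [Real.coe_toNNReal']
      simp only [L']; linarith
    · rw [Hout s hs, Hout s hs]; simp; positivity
  have HK : ∀ s y, |H s y| ≤ |K| := by
    intro s y
    by_cases hs : s ∈ Icc (0:ℝ) T
    · rw [Hin s hs]
      exact (hK s hs _ (projIcc (-M) M hMM y).2).trans (le_abs_self K)
    · rw [Hout s hs]; simp
  obtain ⟨y, hy, heq⟩ := aux_exists_s6 T hT H L' |K| h hL' Hm HL HK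
  have hI := aux_int H L' |K| Hm HL HK y hy
  have hU := aux_upper_s6 T (fun s => H s (y s)) y h M (abs_le.1 hh).2 hy hI heq (by
    intro s hs
    by_cases hs' : s ∈ Icc (0:ℝ) T
    · simp only [Hin s hs', projIcc_of_right_le hMM hs]; exact hup s hs'
    · simp [Hout s hs'])
  have hD := aux_upper_s6 T (fun s => -H s (y s)) (fun s => - y s) (-h) M
    (by have := (abs_le.1 hh).1; linarith) hy.neg (fun a b => (hI a b).neg) (by
      intro t ht
      rw [intervalIntegral.integral_neg, heq t ht]; ring) (by
    intro s hs
    by_cases hs' : s ∈ Icc (0:ℝ) T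
    · simp only [Hin s hs', projIcc_of_le_left hMM (show y s ≤ -M by linarith)]
      have := hlo s hs'; linarith
    · simp [Hout s hs'])
  have hb : ∀ t ∈ Icc (0:ℝ) T, -M ≤ y t ∧ y t ≤ M := fun t ht =>
    ⟨by have := hD t ht; linarith, hU t ht⟩
  refine ⟨y, hy.continuousOn, fun t ht => ?_, hb⟩
  rw [heq t ht]
  congr 1
  refine intervalIntegral.integral_congr fun s hs => ?_
  rw [uIcc_of_le ht.2] at hs
  have hs' : s ∈ Icc (0:ℝ) T := ⟨ht.1.trans hs.1, hs.2⟩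
  simp only [Hin s hs', projIcc_of_mem hMM (hb s hs')]

/-- Bounded solutions of the dominating ODEs under the strong coercivity
condition `σ₂b₃ ≤ −ε` (Theorem 5.5 (i)). -/
theorem stmt6
    (T : ℝ) (hT : 0 < T)
    (Fl Fu : ℝ → ℝ → ℝ)
    (hle : ∀ t ∈ Icc (0:ℝ) T, ∀ y : ℝ, Fl t y ≤ Fu t y)
    (hmeasu : ∀ y : ℝ, Measurable fun t => Fu t y)
    (hmeasl : ∀ y : ℝ, Measurable fun t => Fl t y)
    (hreg : ∀ M : ℝ, 0 < M → ∃ L K : ℝ,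
      ∀ t ∈ Icc (0:ℝ) T,
        LipschitzOnWith (Real.toNNReal L) (fun y => Fu t y) (Icc (-M) M) ∧
        LipschitzOnWith (Real.toNNReal L) (fun y => Fl t y) (Icc (-M) M) ∧
        ∀ y ∈ Icc (-M) M, |Fu t y| ≤ K ∧ |Fl t y| ≤ K)
    (hl hu : ℝ) (hlu : hl ≤ hu)
    (ε C : ℝ) (hε : 0 < ε) (hC : 0 < C)
    (hgrowu : ∀ t ∈ Icc (0:ℝ) T, ∀ y : ℝ, 0 ≤ y →
      Fu t y ≤ -ε * y ^ 3 + C * (y ^ 2 + 1))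
    (hgrowl : ∀ t ∈ Icc (0:ℝ) T, ∀ y : ℝ, y ≤ 0 →
      -ε * y ^ 3 - C * (y ^ 2 + 1) ≤ Fl t y) :
    ∃ lam1 lam2 : ℝ, lam1 ≤ min hl 0 ∧ max hu 0 ≤ lam2 ∧
      ∃ yu yl : ℝ → ℝ,
        ContinuousOn yu (Icc 0 T) ∧ ContinuousOn yl (Icc 0 T) ∧
        (∀ t ∈ Icc (0:ℝ) T, yu t = hu + ∫ s in t..T, Fu s (yu s)) ∧
        (∀ t ∈ Icc (0:ℝ) T, yl t = hl + ∫ s in t..T, Fl s (yl s)) ∧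
        (∀ t ∈ Icc (0:ℝ) T, lam1 ≤ yl t ∧ yl t ≤ lam2) ∧
        (∀ t ∈ Icc (0:ℝ) T, lam1 ≤ yu t ∧ yu t ≤ lam2) := by
  obtain ⟨M, hM1, hMu, hMl, hMe⟩ : ∃ M : ℝ, 1 ≤ M ∧ |hu| ≤ M ∧ |hl| ≤ M ∧ 2 * C ≤ ε * M := by
    have h0 : 0 < 2 * C / ε := by positivity
    refine ⟨|hu| + |hl| + 2 * C / ε + 1, ?_, ?_, ?_, ?_⟩
    · have := abs_nonneg hu; have := abs_nonneg hl; linarith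
    · have := abs_nonneg hl; linarith
    · have := abs_nonneg hu; linarith
    · have h1 : ε * (2 * C / ε) = 2 * C := by field_simp
      have : 0 ≤ ε * (|hu| + |hl| + 1) := by positivity
      linarith
  have hM0 : 0 < M := by linarith
  have key : C * (M ^ 2 + 1) ≤ ε * M ^ 3 := by
    have h1 : 2 * C * M ^ 2 ≤ ε * M * M ^ 2 := by gcongr
    have h2 : C * 1 ≤ C * M ^ 2 := by gcongr; nlinarith
    nlinarith
  have hupu : ∀ t ∈ Icc (0:ℝ) T, Fu t M ≤ 0 := fun t ht => by
    have := hgrowu t ht M hM0.le; linarith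
  have hlol : ∀ t ∈ Icc (0:ℝ) T, 0 ≤ Fl t (-M) := fun t ht => by
    have := hgrowl t ht (-M) (by linarith); nlinarith
  obtain ⟨L, K, hLK⟩ := hreg M hM0
  obtain ⟨yu, hyu, hyu2, hyu3⟩ := aux_main T hT Fu hmeasu M L K hu hM0 hMu
    (fun t ht => (hLK t ht).1) (fun t ht y hy => ((hLK t ht).2.2 y hy).1) hupu
    (fun t ht => (hlol t ht).trans (hle t ht _))
  obtain ⟨yl, hyl, hyl2, hyl3⟩ := aux_main T hT Fl hmeasl M L K hl hM0 hMl
    (fun t ht => (hLK t ht).2.1) (fun t ht y hy => ((hLK t ht).2.2 y hy).2)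
    (fun t ht => (hle t ht _).trans (hupu t ht)) hlol
  exact ⟨-M, M, le_min (abs_le.1 hMl).1 (by linarith), max_le (abs_le.1 hMu).2 hM0.le,
    yu, yl, hyu, hyl, hyu2, hyl2, hyl3, hyu3⟩
end

section
/- Let T > 0 and let F̲, F̄ : [0,T] × ℝ → ℝ satisfy F̲ ≤ F̄ pointwise, with t ↦ F̄(t,y) and t ↦ F̲(t,y) Lebesgue measurable for each y, and assume that for every M > 0 there exist constants L_M, K_M such that for all t ∈ [0,T] both F̄(t,·) and F̲(t,·) are L_M-Lipschitz on [−M, M] and bounded in absolute value by K_M on [−M, M]. Let h̲ ≤ h̄ be real numbers. Suppose there exist a constant λ ≤ h̲ with F̲(t, λ) ≥ 0 for all t, and constants C₁ > 0, C₀ ≥ 0, ε > 0 such that F̄(t,y) ≤ 2εy³ + C₁y + C₀ for all t and all y ≥ 0, and 2εC₂³ ≤ 1, where C₂ := e^{C₁T}·max(h̄, 0) + ((C₀+1)/C₁)(e^{C₁T} − 1). Then the two dominating backward ODEs ȳ(t) = h̄ + ∫_t^T F̄(s, ȳ(s)) ds and y̲(t) = h̲ + ∫_t^T F̲(s, y̲(s))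 ds admit continuous solutions ȳ, y̲ on [0,T] with λ ≤ y̲(t) ≤ C₂ and λ ≤ ȳ(t) ≤ C₂ for all t ∈ [0,T]. -/
open MeasureTheory Set

lemma picard_aux (T : ℝ) (hT : 0 < T) (G : ℝ → ℝ → ℝ) (L K h : ℝ) (hL : 0 < L)
    (hm : Measurable (Function.uncurry G))
    (hLip : ∀ t a b, |G t a - G t b| ≤ L * |a - b|)
    (hK : ∀ t a, |G t a| ≤ K) :
    ∃ y : ℝ → ℝ, Continuous y ∧ ∀ t ∈ Icc (0:ℝ) T, y t = h + ∫ s in t..T, G s (y s) := by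
  have hint : ∀ y : ℝ → ℝ, Continuous y → ∀ a b : ℝ,
      IntervalIntegrable (fun s => G s (y s)) volume a b := by
    intro y hy a b
    have h1 : Measurable (fun s => G s (y s)) :=
      hm.comp (measurable_id.prodMk hy.measurable)
    refine (intervalIntegrable_const (c := K)).mono_fun h1.aestronglyMeasurable ?_
    refine Filter.Eventually.of_forall fun s => ?_
    exact (hK s (y s)).trans (le_abs_self K)
  let ext : C(Icc (0:ℝ) T, ℝ) → ℝ → ℝ := fun z s =>
    Real.exp (2 * L * (T - s)) * z (projIcc 0 T hT.le s)
  have hext : ∀ z, Continuous (ext z) := by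
    intro z
    have : Continuous fun s => z (projIcc 0 T hT.le s) := z.continuous.comp continuous_projIcc
    show Continuous fun s => Real.exp (2 * L * (T - s)) * z (projIcc 0 T hT.le s)
    fun_prop
  have hcont : ∀ z, Continuous fun t => ∫ s in t..T, G s (ext z s) := by
    intro z
    have := (intervalIntegral.continuous_primitive (fun a b => hint _ (hext z) a b) T).neg
    refine this.congr fun t => ?_
    rw [intervalIntegral.integral_symm]; simp
  let Φ : C(Icc (0:ℝ) T, ℝ) → C(Icc (0:ℝ) T, ℝ) := fun z =>
    ⟨fun t => Real.exp (-(2 * L * (T - t))) * (h + ∫ s in (t:ℝ)..T, G s (ext z s)), by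
      have := (hcont z).comp (continuous_subtype_val (p := fun x => x ∈ Icc (0:ℝ) T))
      simp only [Function.comp_def] at this
      fun_prop⟩
  have hΦ : ContractingWith (1/2) Φ := by
    refine ⟨by norm_num, LipschitzWith.of_dist_le_mul fun z w => ?_⟩
    rw [ContinuousMap.dist_le (by positivity)]
    intro t
    have ht := t.2
    set D := dist z w
    have hexpint : ∫ s in (t:ℝ)..T, L * Real.exp (2 * L * (T - s)) * D
        = D / 2 * (Real.exp (2 * L * (T - t)) - 1) := by
      have hd : ∀ s ∈ uIcc (t:ℝ) T, HasDerivAt (fun s => -(D/2) * Real.exp (2 * L * (T - s)))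
          (L * Real.exp (2 * L * (T - s)) * D) s := by
        intro s _
        have := (((((hasDerivAt_id s).const_sub T).const_mul (2*L))).exp).const_mul (-(D/2))
        refine HasDerivAt.congr_deriv this ?_
        simp only [id]; ring
      rw [intervalIntegral.integral_eq_sub_of_hasDerivAt hd]
      · simp; ring
      · exact (by fun_prop : Continuous _).intervalIntegrable _ _
    have hdiff : |(∫ s in (t:ℝ)..T, G s (ext z s)) - ∫ s in (t:ℝ)..T, G s (ext w s)|
        ≤ D / 2 * (Real.exp (2 * L * (T - t)) - 1) := by
      rw [← intervalIntegral.integral_sub (hint _ (hext z) _ _) (hint _ (hext w) _ _), ← hexpint]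
      rw [← Real.norm_eq_abs]
      refine intervalIntegral.norm_integral_le_of_norm_le ht.2 ?_ ?_
      · refine Filter.Eventually.of_forall fun s _ => ?_
        refine (hLip s _ _).trans ?_
        show L * |Real.exp (2 * L * (T - s)) * z _ - Real.exp (2 * L * (T - s)) * w _| ≤ _
        rw [← mul_sub, abs_mul, abs_of_pos (Real.exp_pos _), ← mul_assoc]
        have : |z (projIcc 0 T hT.le s) - w (projIcc 0 T hT.le s)| ≤ D := by
          rw [← Real.dist_eq]
          exact ContinuousMap.dist_apply_le_dist _
        gcongr
      · exact (by fun_prop : Continuous _).intervalIntegrable _ _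
    show |Real.exp (-(2 * L * (T - t))) * (h + ∫ s in (t:ℝ)..T, G s (ext z s))
      - Real.exp (-(2 * L * (T - t))) * (h + ∫ s in (t:ℝ)..T, G s (ext w s))| ≤ _
    rw [← mul_sub, abs_mul, abs_of_pos (Real.exp_pos _), add_sub_add_left_eq_sub]
    have hD : 0 ≤ D := dist_nonneg
    calc _ ≤ Real.exp (-(2 * L * (T - t))) * (D / 2 * (Real.exp (2 * L * (T - t)) - 1)) := by
          gcongr
      _ = D / 2 * (1 - Real.exp (-(2 * L * (T - t)))) := by
          have : Real.exp (-(2 * L * (T - t))) * Real.exp (2 * L * (T - t)) = 1 := by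
            rw [← Real.exp_add]; simp
          linear_combination D / 2 * this
      _ ≤ D / 2 * 1 := by
          gcongr; linarith [Real.exp_pos (-(2 * L * (T - t)))]
      _ = _ := by push_cast; ring
  have : Nonempty C(Icc (0:ℝ) T, ℝ) := ⟨0⟩
  obtain ⟨z, hz⟩ : ∃ z, Φ z = z := ⟨hΦ.fixedPoint, hΦ.fixedPoint_isFixedPt⟩
  refine ⟨ext z, hext z, fun t ht => ?_⟩
  have h1 : z ⟨t, ht⟩ = Real.exp (-(2 * L * (T - t))) * (h + ∫ s in t..T, G s (ext z s)) := by
    conv_lhs => rw [← hz]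
    rfl
  show Real.exp (2 * L * (T - t)) * z (projIcc 0 T hT.le t) = _
  rw [projIcc_of_mem hT.le ht, h1, ← mul_assoc, ← Real.exp_add]
  simp

/-- comparison: if on the set where u > 0 the increments of u are nonpositive backward. -/
lemma comp_aux (T : ℝ) (u : ℝ → ℝ) (hu : Continuous u) (hT : u T ≤ 0)
    (h : ∀ a b, 0 ≤ a → a ≤ b → b ≤ T → (∀ s ∈ Ioo a b, 0 < u s) → u a ≤ u b) :
    ∀ t ∈ Icc (0:ℝ) T, u t ≤ 0 := by
  intro t ht
  by_contra! hc
  let S := {s | u s ≤ 0} ∩ Icc t T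
  have hS : IsClosed S := (isClosed_le hu continuous_const).inter isClosed_Icc
  have hne : S.Nonempty := ⟨T, hT, ht.2, le_rfl⟩
  have hbd : BddBelow S := ⟨t, fun s hs => hs.2.1⟩
  have hmem := hS.csInf_mem hne hbd
  have := h t (sInf S) ht.1 hmem.2.1 hmem.2.2 (fun s hs => by
    by_contra! hneg
    exact absurd (csInf_le hbd ⟨hneg, hs.1.le, hs.2.le.trans hmem.2.2⟩) (not_le.2 hs.2))
  have h2 : u (sInf S) ≤ 0 := hmem.1
  linarith

lemma main_aux (T : ℝ) (hT : 0 < T) (F : ℝ → ℝ → ℝ) (hmeas : ∀ y, Measurable fun t => F t y)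
    (M L K : ℝ)
    (hreg : ∀ t ∈ Icc (0:ℝ) T, LipschitzOnWith (Real.toNNReal L) (fun y => F t y) (Icc (-M) M) ∧
      ∀ y ∈ Icc (-M) M, |F t y| ≤ K)
    (h lam : ℝ) (φ φ' : ℝ → ℝ) (hlam : lam ≤ h) (hφT : h ≤ φ T)
    (hlamM : -M ≤ lam) (hφ : ∀ t ∈ Icc (0:ℝ) T, lam ≤ φ t ∧ φ t ≤ M)
    (hd : ∀ t, HasDerivAt φ (φ' t) t) (hφ' : Continuous φ')
    (hsub : ∀ t ∈ Icc (0:ℝ) T, 0 ≤ F t lam)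
    (hsup : ∀ t ∈ Icc (0:ℝ) T, F t (φ t) ≤ - φ' t) :
    ∃ y : ℝ → ℝ, Continuous y ∧ (∀ t ∈ Icc (0:ℝ) T, y t = h + ∫ s in t..T, F s (y s)) ∧
      ∀ t ∈ Icc (0:ℝ) T, lam ≤ y t ∧ y t ≤ φ t := by
  have hφc : Continuous φ := continuous_iff_continuousAt.2 fun t => (hd t).continuousAt
  let p : ℝ → ℝ := fun s => max 0 (min s T)
  have hp : Continuous p := by fun_prop
  have hpm : ∀ s, p s ∈ Icc 0 T := fun s =>
    ⟨le_max_left _ _, max_le hT.le (min_le_right _ _)⟩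
  have hpe : ∀ s ∈ Icc 0 T, p s = s := fun s hs => by
    simp [p, min_eq_left hs.2, max_eq_right hs.1]
  have hM : -M ≤ M := hlamM.trans ((hφ 0 ⟨le_rfl, hT.le⟩).1.trans (hφ 0 ⟨le_rfl, hT.le⟩).2)
  let c : ℝ → ℝ := fun y => max (-M) (min y M)
  have hcm : ∀ y, c y ∈ Icc (-M) M := fun y => ⟨le_max_left _ _, max_le hM (min_le_right _ _)⟩
  have hce : ∀ y ∈ Icc (-M) M, c y = y := fun s hs => by
    simp [c, min_eq_left hs.2, max_eq_right hs.1]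
  have hcc : Continuous c := by fun_prop
  have hH : Measurable (Function.uncurry fun t y => F (p t) (c y)) := by
    have := stronglyMeasurable_uncurry_of_continuous_of_stronglyMeasurable
      (u := fun y t => F (p t) (c y)) (fun t => by
        exact (hreg (p t) (hpm t)).1.continuousOn.comp_continuous hcc hcm)
      (fun y => ((hmeas (c y)).comp hp.measurable).stronglyMeasurable)
    exact this.measurable.comp measurable_swap
  let q : ℝ → ℝ → ℝ := fun t y => max lam (min y (φ (p t)))
  have hqm : ∀ t y, q t y ∈ Icc (-M) M := fun t y =>
    ⟨hlamM.trans (le_max_left _ _), max_le ((hφ _ (hpm t)).1.trans (hφ _ (hpm t)).2)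
      ((min_le_right _ _).trans (hφ _ (hpm t)).2)⟩
  let G : ℝ → ℝ → ℝ := fun t y => F (p t) (q t y)
  have hG : Measurable (Function.uncurry G) := by
    have hq : Continuous fun x : ℝ × ℝ => (x.1, q x.1 x.2) := by
      simp only [q]; fun_prop
    have he : Function.uncurry G = (Function.uncurry fun t y => F (p t) (c y)) ∘
        fun x : ℝ × ℝ => (x.1, q x.1 x.2) := by
      funext x
      simp [G, Function.uncurry, hce _ (hqm x.1 x.2)]
    rw [he]
    exact hH.comp hq.measurable
  have hqL : ∀ t a b, |q t a - q t b| ≤ |a - b| := fun t a b => by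
    have h1 := abs_max_sub_max_le_max lam (min a (φ (p t))) lam (min b (φ (p t)))
    have h2 := abs_min_sub_min_le_max a (φ (p t)) b (φ (p t))
    simp only [sub_self, abs_zero] at h1 h2
    exact h1.trans (max_le (abs_nonneg _) (h2.trans (max_le le_rfl (abs_nonneg _))))
  obtain ⟨y, hy, hyeq⟩ := picard_aux T hT G (max L 1) K h (by positivity) hG
    (fun t a b => by
      have := (hreg _ (hpm t)).1.dist_le_mul _ (hqm t a) _ (hqm t b)
      rw [Real.dist_eq, Real.dist_eq] at this
      refine this.trans ?_
      have h1 : ((Real.toNNReal L : NNReal) : ℝ) ≤ max L 1 := by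
        rw [Real.coe_toNNReal']; exact max_le_max le_rfl zero_le_one
      have := hqL t a b
      gcongr)
    (fun t a => (hreg _ (hpm t)).2 _ (hqm t a))
  have hyint : ∀ a b, IntervalIntegrable (fun s => G s (y s)) volume a b := by
    intro a b
    have h1 : Measurable (fun s => G s (y s)) :=
      hG.comp (measurable_id.prodMk hy.measurable)
    refine (intervalIntegrable_const (c := K)).mono_fun h1.aestronglyMeasurable ?_
    refine Filter.Eventually.of_forall fun s => ?_
    exact ((hreg _ (hpm s)).2 _ (hqm s (y s))).trans (le_abs_self K)
  have hyT : y T = h := by simpa using hyeq T ⟨hT.le, le_rfl⟩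
  have hinc : ∀ a b, 0 ≤ a → a ≤ b → b ≤ T → y a - y b = ∫ s in a..b, G s (y s) := by
    intro a b ha hab hb
    rw [hyeq a ⟨ha, hab.trans hb⟩, hyeq b ⟨ha.trans hab, hb⟩,
      ← intervalIntegral.integral_add_adjacent_intervals (hyint a b) (hyint b T)]
    ring
  have hup : ∀ t ∈ Icc (0:ℝ) T, y t - φ t ≤ 0 := by
    refine comp_aux T (fun t => y t - φ t) (hy.sub hφc) (by simp only [hyT]; linarith) ?_
    intro a b ha hab hb hpos
    have h1 := hinc a b ha hab hb
    have h2 : ∫ s in a..b, - φ' s = φ a - φ b := by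
      rw [intervalIntegral.integral_neg, intervalIntegral.integral_eq_sub_of_hasDerivAt
        (fun s _ => hd s) (hφ'.intervalIntegrable _ _)]
      ring
    have h3 : ∫ s in a..b, G s (y s) ≤ ∫ s in a..b, - φ' s := by
      refine intervalIntegral.integral_mono_on_of_le_Ioo hab (hyint a b)
        (hφ'.neg.intervalIntegrable _ _) ?_
      intro s hs
      have hs' : s ∈ Icc 0 T := ⟨ha.trans hs.1.le, hs.2.le.trans hb⟩
      have h4 : q s (y s) = φ s := by
        have := hpos s hs
        simp only [q, hpe s hs']
        rw [min_eq_right (by linarith), max_eq_right (hφ s hs').1]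
      simp only [G, h4, hpe s hs']
      exact hsup s hs'
    show y a - φ a ≤ y b - φ b
    linarith
  have hlow : ∀ t ∈ Icc (0:ℝ) T, lam - y t ≤ 0 := by
    refine comp_aux T (fun t => lam - y t) (by fun_prop) (by simp only [hyT]; linarith) ?_
    intro a b ha hab hb hpos
    have h1 := hinc a b ha hab hb
    have h3 : ∫ s in a..b, (0:ℝ) ≤ ∫ s in a..b, G s (y s) := by
      refine intervalIntegral.integral_mono_on_of_le_Ioo hab
        (continuous_const.intervalIntegrable _ _) (hyint a b) ?_
      intro s hs
      have hs' : s ∈ Icc 0 T := ⟨ha.trans hs.1.le, hs.2.le.trans hb⟩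
      have h4 : q s (y s) = lam := by
        have := hpos s hs
        simp only [q]
        exact max_eq_left ((min_le_left _ _).trans (by linarith))
      simp only [G, h4, hpe s hs']
      exact hsub s hs'
    simp only [intervalIntegral.integral_zero] at h3
    show lam - y a ≤ lam - y b
    linarith
  refine ⟨y, hy, fun t ht => ?_, fun t ht => ⟨by linarith [hlow t ht], by linarith [hup t ht]⟩⟩
  rw [hyeq t ht]
  congr 1
  refine intervalIntegral.integral_congr fun s hs => ?_
  rw [uIcc_of_le ht.2] at hs
  have hs' : s ∈ Icc 0 T := ⟨ht.1.trans hs.1, hs.2⟩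
  have h4 : q s (y s) = y s := by
    simp only [q, hpe s hs']
    rw [min_eq_left (by linarith [hup s hs']), max_eq_right (by linarith [hlow s hs'])]
  simp only [G, h4, hpe s hs']

/-- Bounded solutions of the dominating ODEs under the one-sided smallness
condition with a subsolution level `λ ≤ h̲` (Theorem 5.5 (ii)). -/
theorem stmt7
    (T : ℝ) (hT : 0 < T)
    (Fl Fu : ℝ → ℝ → ℝ)
    (hle : ∀ t ∈ Icc (0:ℝ) T, ∀ y : ℝ, Fl t y ≤ Fu t y)
    (hmeasu : ∀ y : ℝ, Measurable fun t => Fu t y)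
    (hmeasl : ∀ y : ℝ, Measurable fun t => Fl t y)
    (hreg : ∀ M : ℝ, 0 < M → ∃ L K : ℝ,
      ∀ t ∈ Icc (0:ℝ) T,
        LipschitzOnWith (Real.toNNReal L) (fun y => Fu t y) (Icc (-M) M) ∧
        LipschitzOnWith (Real.toNNReal L) (fun y => Fl t y) (Icc (-M) M) ∧
        ∀ y ∈ Icc (-M) M, |Fu t y| ≤ K ∧ |Fl t y| ≤ K)
    (hl hu : ℝ) (hlu : hl ≤ hu)
    (lam C1 C0 ε : ℝ) (hlam : lam ≤ hl) (hC1 : 0 < C1) (hC0 : 0 ≤ C0) (hε : 0 < ε)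
    (hsub : ∀ t ∈ Icc (0:ℝ) T, 0 ≤ Fl t lam)
    (hgrowu : ∀ t ∈ Icc (0:ℝ) T, ∀ y : ℝ, 0 ≤ y →
      Fu t y ≤ 2 * ε * y ^ 3 + C1 * y + C0)
    (hεsmall : 2 * ε *
        (Real.exp (C1 * T) * max hu 0 +
          ((C0 + 1) / C1) * (Real.exp (C1 * T) - 1)) ^ 3 ≤ 1) :
    ∃ yu yl : ℝ → ℝ,
      ContinuousOn yu (Icc 0 T) ∧ ContinuousOn yl (Icc 0 T) ∧
      (∀ t ∈ Icc (0:ℝ) T, yu t = hu + ∫ s in t..T, Fu s (yu s)) ∧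
      (∀ t ∈ Icc (0:ℝ) T, yl t = hl + ∫ s in t..T, Fl s (yl s)) ∧
      (∀ t ∈ Icc (0:ℝ) T, lam ≤ yl t ∧
        yl t ≤ Real.exp (C1 * T) * max hu 0 +
          ((C0 + 1) / C1) * (Real.exp (C1 * T) - 1)) ∧
      (∀ t ∈ Icc (0:ℝ) T, lam ≤ yu t ∧
        yu t ≤ Real.exp (C1 * T) * max hu 0 +
          ((C0 + 1) / C1) * (Real.exp (C1 * T) - 1)) := by
  set C2 := Real.exp (C1 * T) * max hu 0 + ((C0 + 1) / C1) * (Real.exp (C1 * T) - 1) with hC2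
  let φ : ℝ → ℝ := fun t =>
    Real.exp (C1 * (T - t)) * max hu 0 + ((C0 + 1) / C1) * (Real.exp (C1 * (T - t)) - 1)
  let φ' : ℝ → ℝ := fun t => -(C1 * φ t + C0 + 1)
  have hd : ∀ t, HasDerivAt φ (φ' t) t := by
    intro t
    have he := ((((hasDerivAt_id t).const_sub T).const_mul C1)).exp
    have := (he.mul_const (max hu 0)).add ((he.sub_const 1).const_mul ((C0 + 1) / C1))
    refine HasDerivAt.congr_deriv this ?_
    simp only [φ', φ, id]
    field_simp
    ring
  have hφc : Continuous φ := continuous_iff_continuousAt.2 fun t => (hd t).continuousAt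
  have hφ' : Continuous φ' := by fun_prop
  have hm0 : 0 ≤ max hu 0 := le_max_right _ _
  have hc0 : 0 ≤ (C0 + 1) / C1 := by positivity
  have hφlow : ∀ t ∈ Icc (0:ℝ) T, max hu 0 ≤ φ t := by
    intro t ht
    have h1 : 1 ≤ Real.exp (C1 * (T - t)) :=
      Real.one_le_exp (mul_nonneg hC1.le (by linarith [ht.2]))
    simp only [φ]
    nlinarith [mul_nonneg hc0 (sub_nonneg.2 h1), mul_nonneg hm0 (sub_nonneg.2 h1)]
  have hφup : ∀ t ∈ Icc (0:ℝ) T, φ t ≤ C2 := by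
    intro t ht
    have h1 : Real.exp (C1 * (T - t)) ≤ Real.exp (C1 * T) :=
      Real.exp_le_exp.2 (mul_le_mul_of_nonneg_left (by linarith [ht.1]) hC1.le)
    simp only [φ, hC2]
    gcongr
  have hlh : lam ≤ max hu 0 := (hlam.trans hlu).trans (le_max_left _ _)
  have hsup : ∀ t ∈ Icc (0:ℝ) T, Fu t (φ t) ≤ - φ' t := by
    intro t ht
    have h0 : 0 ≤ φ t := hm0.trans (hφlow t ht)
    have h1 := hgrowu t ht _ h0
    have h2 : 2 * ε * φ t ^ 3 ≤ 2 * ε * C2 ^ 3 := by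
      have := hφup t ht
      gcongr
    simp only [φ']
    linarith
  have hTT : T ∈ Icc (0:ℝ) T := ⟨hT.le, le_rfl⟩
  have hC20 : 0 ≤ C2 := hm0.trans ((hφlow T hTT).trans (hφup T hTT))
  obtain ⟨L, K, hLK⟩ := hreg (|lam| + C2 + 1) (by positivity)
  have hb1 : -(|lam| + C2 + 1) ≤ lam := by linarith [neg_abs_le lam]
  have hb2 : ∀ t ∈ Icc (0:ℝ) T, lam ≤ φ t ∧ φ t ≤ |lam| + C2 + 1 := fun t ht =>
    ⟨hlh.trans (hφlow t ht), by linarith [hφup t ht, abs_nonneg lam]⟩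
  have huT : hu ≤ φ T := (le_max_left _ _).trans (hφlow T hTT)
  obtain ⟨yu, hyu, hyu1, hyu2⟩ := main_aux T hT Fu hmeasu (|lam| + C2 + 1) L K
    (fun t ht => ⟨(hLK t ht).1, fun y hy => ((hLK t ht).2.2 y hy).1⟩) hu lam φ φ'
    (hlam.trans hlu) huT hb1 hb2 hd hφ' (fun t ht => (hsub t ht).trans (hle t ht _)) hsup
  obtain ⟨yl, hyl, hyl1, hyl2⟩ := main_aux T hT Fl hmeasl (|lam| + C2 + 1) L K
    (fun t ht => ⟨(hLK t ht).2.1, fun y hy => ((hLK t ht).2.2 y hy).2⟩) hl lam φ φ'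
    hlam (hlu.trans huT) hb1 hb2 hd hφ' hsub (fun t ht => (hle t ht _).trans (hsup t ht))
  exact ⟨yu, yl, hyu.continuousOn, hyl.continuousOn, hyu1, hyl1,
    fun t ht => ⟨(hyl2 t ht).1, (hyl2 t ht).2.trans (hφup t ht)⟩,
    fun t ht => ⟨(hyu2 t ht).1, (hyu2 t ht).2.trans (hφup t ht)⟩⟩
end

section
/- Let T > 0 and let F̲, F̄ : [0,T] × ℝ → ℝ satisfy F̲ ≤ F̄ pointwise, with t ↦ F̄(t,y) and t ↦ F̲(t,y) Lebesgue measurable for each y, and assume that for every M > 0 there exist constants L_M, K_M such that for all t ∈ [0,T] both F̄(t,·) and F̲(t,·) are L_M-Lipschitz on [−M, M] and bounded in absolute value by K_M on [−M, M]. Let h̲ ≤ h̄ be real numbers. Suppose there exist a constant λ ≥ h̄ with F̄(t, λ) ≤ 0 for all t, and constants C₁ > 0, C₀ ≥ 0, ε > 0 such that F̲(t,y) ≥ 2εy³ + C₁y − C₀ for all t and all y ≤ 0, and 2εC₂³ ≤ 1, where C₂ := e^{C₁T}·max(−h̲, 0) + ((C₀+1)/C₁)(e^{C₁T} − 1). Then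 the two dominating backward ODEs ȳ(t) = h̄ + ∫_t^T F̄(s, ȳ(s)) ds and y̲(t) = h̲ + ∫_t^T F̲(s, y̲(s)) ds admit continuous solutions ȳ, y̲ on [0,T] with −C₂ ≤ y̲(t) ≤ λ and −C₂ ≤ ȳ(t) ≤ λ for all t ∈ [0,T]. -/
open MeasureTheory Set


theorem aux_picard (T h L K : ℝ) (hT : 0 < T) (hL : 0 ≤ L) (G : ℝ → ℝ → ℝ)
    (hm : Measurable (Function.uncurry G))
    (hK : ∀ s y, |G s y| ≤ K) (hLip : ∀ s a b, |G s a - G s b| ≤ L * |a - b|) :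
    ∃ y : ℝ → ℝ, Continuous y ∧ ∀ t ∈ Icc (0:ℝ) T, y t = h + ∫ s in t..T, G s (y s) := by
  have hint : ∀ u : ℝ → ℝ, Continuous u → ∀ a b, IntervalIntegrable (fun s => G s (u s)) volume a b := by
    intro u hu a b
    have h1 : Measurable (fun s => G s (u s)) := hm.comp (measurable_id.prodMk hu.measurable)
    refine (intervalIntegrable_const (c := K)).mono_fun h1.aestronglyMeasurable ?_
    refine Filter.Eventually.of_forall fun s => ?_
    simp only [Real.norm_eq_abs]
    exact (hK s _).trans (le_abs_self K)
  set μ : ℝ := L + 1 with hμ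
  have hμ0 : 0 < μ := by linarith
  let ext : C(Icc (0:ℝ) T, ℝ) → ℝ → ℝ := fun z s => Real.exp (μ * (T - s)) * z (projIcc 0 T hT.le s)
  have hext : ∀ z, Continuous (ext z) := by
    intro z
    have : Continuous (fun s => z (projIcc 0 T hT.le s)) := z.continuous.comp continuous_projIcc
    have h2 : Continuous (fun s : ℝ => Real.exp (μ * (T - s))) := by fun_prop
    exact h2.mul this
  have hIc : ∀ u : ℝ → ℝ, Continuous u → Continuous (fun t => ∫ s in t..T, G s (u s)) := by
    intro u hu
    have h1 := intervalIntegral.continuous_primitive (fun a b => hint u hu a b) T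
    have h2 : (fun t => ∫ s in t..T, G s (u s)) = fun t => -∫ s in T..t, G s (u s) := by
      funext t; rw [intervalIntegral.integral_symm]
    rw [h2]; exact h1.neg
  let Φ : C(Icc (0:ℝ) T, ℝ) → C(Icc (0:ℝ) T, ℝ) := fun z =>
    ⟨fun t => Real.exp (-(μ * (T - t))) * (h + ∫ s in (t:ℝ)..T, G s (ext z s)), by
      have h1 := (hIc _ (hext z)).comp (continuous_subtype_val (p := fun x => x ∈ Icc (0:ℝ) T))
      have h2 : Continuous (fun t : Icc (0:ℝ) T => Real.exp (-(μ * (T - (t:ℝ))))) := by fun_prop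
      exact h2.mul (continuous_const.add h1)⟩
  have hexpint : ∀ t, ∫ s in t..T, μ * Real.exp (μ * (T - s)) = Real.exp (μ * (T - t)) - 1 := by
    intro t
    have hd : ∀ s ∈ uIcc t T, HasDerivAt (fun s => -Real.exp (μ * (T - s))) (μ * Real.exp (μ * (T - s))) s := by
      intro s _
      have := ((((hasDerivAt_id s).const_sub T).const_mul μ).exp).neg
      refine this.congr_deriv ?_
      simp only [id]; ring
    rw [intervalIntegral.integral_eq_sub_of_hasDerivAt hd (Continuous.intervalIntegrable (by fun_prop) _ _)]
    simp
    ring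
  have hbound : ∀ z z', dist (Φ z) (Φ z') ≤ (L / μ) * dist z z' := by
    intro z z'
    rw [ContinuousMap.dist_le (by positivity)]
    rintro ⟨t, ht⟩
    have e1 : dist (Φ z ⟨t, ht⟩) (Φ z' ⟨t, ht⟩) = Real.exp (-(μ * (T - t))) *
        |∫ s in t..T, (G s (ext z s) - G s (ext z' s))| := by
      rw [intervalIntegral.integral_sub (hint _ (hext z) _ _) (hint _ (hext z') _ _), Real.dist_eq]
      simp only [Φ, ContinuousMap.coe_mk]
      rw [← mul_sub, abs_mul, abs_of_pos (Real.exp_pos _)]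
      congr 2; ring
    have e2 : |∫ s in t..T, (G s (ext z s) - G s (ext z' s))| ≤
        ∫ s in t..T, (L / μ * dist z z') * (μ * Real.exp (μ * (T - s))) := by
      rw [← Real.norm_eq_abs]
      apply intervalIntegral.norm_integral_le_of_norm_le ht.2
      · refine Filter.Eventually.of_forall fun s _ => ?_
        rw [Real.norm_eq_abs]
        refine (hLip s _ _).trans ?_
        simp only [ext]
        rw [← mul_sub, abs_mul, abs_of_pos (Real.exp_pos _), ← Real.dist_eq]
        have := ContinuousMap.dist_apply_le_dist (f := z) (g := z') (projIcc 0 T hT.le s)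
        have h3 : L / μ * dist z z' * (μ * Real.exp (μ * (T - s))) =
          L * (Real.exp (μ * (T - s)) * dist z z') := by field_simp
        rw [h3]
        gcongr
      · exact Continuous.intervalIntegrable (by fun_prop) _ _
    rw [intervalIntegral.integral_const_mul, hexpint] at e2
    rw [e1]
    calc _ ≤ Real.exp (-(μ * (T - t))) * (L / μ * dist z z' * (Real.exp (μ * (T - t)) - 1)) := by gcongr
      _ = L / μ * dist z z' * (1 - Real.exp (-(μ * (T - t)))) := by
        have : Real.exp (-(μ * (T - t))) * Real.exp (μ * (T - t)) = 1 := by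
          rw [← Real.exp_add]; simp
        linear_combination (L / μ * dist z z') * this
      _ ≤ L / μ * dist z z' := by
        have h4 : 0 ≤ L / μ * dist z z' := by positivity
        have h5 := Real.exp_pos (-(μ * (T - t)))
        nlinarith
  have hc : ContractingWith (Real.toNNReal (L / μ)) Φ := by
    constructor
    · rw [Real.toNNReal_lt_one, div_lt_one hμ0]; linarith
    · apply LipschitzWith.of_dist_le_mul
      intro z z'
      rw [Real.coe_toNNReal _ (by positivity)]
      exact hbound z z'
  obtain ⟨z, hz⟩ : ∃ z, Φ z = z := ⟨_, hc.fixedPoint_isFixedPt⟩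
  refine ⟨ext z, hext z, fun t ht => ?_⟩
  have h1 : ext z t = Real.exp (μ * (T - t)) * z ⟨t, ht⟩ := by
    simp only [ext]; rw [projIcc_of_mem hT.le ht]
  have h2 : z ⟨t, ht⟩ = Real.exp (-(μ * (T - t))) * (h + ∫ s in t..T, G s (ext z s)) := by
    conv_lhs => rw [← hz]
    rfl
  rw [h1, h2, ← mul_assoc, ← Real.exp_add]
  simp

/-- Comparison: if `D T ≤ 0` and `D a ≤ D b` whenever `D ≥ 0` on `[a,b]`, then `D ≤ 0`. -/
theorem aux_comp (T : ℝ) (D : ℝ → ℝ) (hD : Continuous D) (hDT : D T ≤ 0)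
    (hmono : ∀ a b, 0 ≤ a → a ≤ b → b ≤ T → (∀ s ∈ Icc a b, 0 ≤ D s) → D a ≤ D b) :
    ∀ t ∈ Icc (0:ℝ) T, D t ≤ 0 := by
  intro t ht
  by_contra hcon
  push Not at hcon
  let S := {s | s ∈ Icc t T ∧ D s ≤ 0}
  have hSc : IsClosed S := isClosed_Icc.inter (isClosed_le hD continuous_const)
  have hSn : S.Nonempty := ⟨T, ⟨ht.2, le_rfl⟩, hDT⟩
  have hSb : BddBelow S := ⟨t, fun s hs => hs.1.1⟩
  have hmem := hSc.csInf_mem hSn hSb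
  set b := sInf S
  have hpos : ∀ s, t ≤ s → s < b → 0 < D s := by
    intro s h1 h2
    by_contra h3
    push Not at h3
    have : b ≤ s := csInf_le hSb ⟨⟨h1, h2.le.trans hmem.1.2⟩, h3⟩
    linarith
  have htb : t < b := lt_of_le_of_ne hmem.1.1 (by rintro h; rw [← h] at hmem; linarith [hmem.2])
  have hb0 : 0 ≤ D b := by
    have h1 : b ∈ closure (Ico t b) := by
      rw [closure_Ico htb.ne]; exact ⟨htb.le, le_rfl⟩
    have h2 : closure (Ico t b) ⊆ {s | 0 ≤ D s} :=
      closure_minimal (fun s hs => (hpos s hs.1 hs.2).le) (isClosed_le continuous_const hD)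
    exact h2 h1
  have := hmono t b ht.1 htb.le hmem.1.2 (by
    intro s hs
    rcases hs.2.lt_or_eq with h | h
    · exact (hpos s hs.1 h).le
    · rw [h]; exact hb0)
  linarith [hmem.2]

theorem aux_solve (T h lam : ℝ) (hT : 0 < T) (F : ℝ → ℝ → ℝ)
    (hmeas : ∀ y : ℝ, Measurable fun t => F t y)
    (hreg : ∀ M : ℝ, 0 < M → ∃ L K : ℝ, ∀ t ∈ Icc (0:ℝ) T,
        LipschitzOnWith (Real.toNNReal L) (fun y => F t y) (Icc (-M) M) ∧
        ∀ y ∈ Icc (-M) M, |F t y| ≤ K)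
    (w g : ℝ → ℝ) (hw : Continuous w) (hg : Continuous g)
    (hwg : ∀ a b, ∫ s in a..b, g s = w a - w b)
    (hwT : w T ≤ h) (hh : h ≤ lam) (hwl : ∀ t ∈ Icc (0:ℝ) T, w t ≤ lam)
    (hgF : ∀ t ∈ Icc (0:ℝ) T, g t ≤ F t (w t)) (hsup : ∀ t ∈ Icc (0:ℝ) T, F t lam ≤ 0) :
    ∃ y : ℝ → ℝ, Continuous y ∧ (∀ t ∈ Icc (0:ℝ) T, y t = h + ∫ s in t..T, F s (y s)) ∧
      ∀ t ∈ Icc (0:ℝ) T, w t ≤ y t ∧ y t ≤ lam := by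
  classical
  obtain ⟨B, hB⟩ : ∃ B, ∀ t ∈ Icc (0:ℝ) T, |w t| ≤ B := by
    obtain ⟨B, hB⟩ := isCompact_Icc.exists_bound_of_continuousOn (s := Icc (0:ℝ) T) hw.continuousOn
    exact ⟨B, hB⟩
  let M := |B| + |lam| + 1
  have hM : 0 < M := by positivity
  obtain ⟨L, K, hLK⟩ := hreg M hM
  let F' : ℝ → ℝ → ℝ := fun t y => if t ∈ Icc (0:ℝ) T then F t y else 0
  have hF'm : ∀ y, Measurable fun t => F' t y := fun y =>
    Measurable.ite measurableSet_Icc (hmeas y) measurable_const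
  have hF'c : ∀ t, Continuous fun y => F' t y := by
    intro t
    by_cases ht : t ∈ Icc (0:ℝ) T
    · simp only [F', ht, if_true]
      rw [continuous_iff_continuousAt]
      intro y
      obtain ⟨L', K', h'⟩ := hreg (|y| + 1) (by positivity)
      refine (h' t ht).1.continuousOn.continuousAt (Icc_mem_nhds ?_ ?_)
      · linarith [neg_abs_le y]
      · linarith [le_abs_self y]
    · simp only [F', ht, if_false]; exact continuous_const
  have hF'j : Measurable (fun p : ℝ × ℝ => F' p.1 p.2) := by
    have := measurable_uncurry_of_continuous_of_measurable (u := fun y t => F' t y) hF'c hF'm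
    exact this.comp measurable_swap
  let c : ℝ → ℝ → ℝ := fun s y => max (w s) (min y lam)
  have hcm : ∀ s ∈ Icc (0:ℝ) T, ∀ y, c s y ∈ Icc (-M) M := by
    intro s hs y
    have h1 := abs_le.1 (hB s hs)
    have h2 := le_abs_self B
    have h3 := le_abs_self lam
    have h4 := abs_nonneg lam
    have h5 := abs_nonneg B
    constructor
    · exact le_trans (by simp only [M]; linarith) (le_max_left _ _)
    · refine max_le (by simp only [M]; linarith) ((min_le_right _ _).trans (by simp only [M]; linarith))
  have hclip : ∀ s a b, |c s a - c s b| ≤ |a - b| := by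
    intro s a b
    refine (abs_max_sub_max_le_max _ _ _ _).trans ?_
    refine max_le (by simp) ?_
    refine (abs_min_sub_min_le_max _ _ _ _).trans ?_
    exact max_le le_rfl (by simp)
  have hcmeas : Measurable (fun p : ℝ × ℝ => c p.1 p.2) := by
    have : Continuous (fun p : ℝ × ℝ => c p.1 p.2) := by simp only [c]; fun_prop
    exact this.measurable
  let G : ℝ → ℝ → ℝ := fun s y => F' s (c s y)
  have hGj : Measurable (Function.uncurry G) := hF'j.comp (measurable_fst.prodMk hcmeas)
  have hGK : ∀ s y, |G s y| ≤ |K| := by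
    intro s y
    by_cases hs : s ∈ Icc (0:ℝ) T
    · simp only [G, F', hs, if_true]
      exact ((hLK s hs).2 _ (hcm s hs y)).trans (le_abs_self K)
    · simp only [G, F', hs, if_false, abs_zero]; positivity
  have hGL : ∀ s a b, |G s a - G s b| ≤ (Real.toNNReal L : ℝ) * |a - b| := by
    intro s a b
    by_cases hs : s ∈ Icc (0:ℝ) T
    · simp only [G, F', hs, if_true]
      have := (hLK s hs).1.dist_le_mul _ (hcm s hs a) _ (hcm s hs b)
      rw [Real.dist_eq, Real.dist_eq] at this
      exact this.trans (mul_le_mul_of_nonneg_left (hclip s a b) (NNReal.coe_nonneg _))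
    · simp only [G, F', hs, if_false, sub_self, abs_zero]; positivity
  obtain ⟨y, hyc, hy⟩ := aux_picard T h _ _ hT (NNReal.coe_nonneg _) G hGj hGK hGL
  have hint : ∀ a b, IntervalIntegrable (fun s => G s (y s)) volume a b := by
    intro a b
    have h1 : Measurable (fun s => G s (y s)) := hGj.comp (measurable_id.prodMk hyc.measurable)
    refine (intervalIntegrable_const (c := |K|)).mono_fun h1.aestronglyMeasurable ?_
    refine Filter.Eventually.of_forall fun s => ?_
    simp only [Real.norm_eq_abs, abs_abs]
    exact hGK s _
  have hyab : ∀ a b, 0 ≤ a → a ≤ b → b ≤ T → y a = y b + ∫ s in a..b, G s (y s) := by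
    intro a b h1 h2 h3
    rw [hy a ⟨h1, h2.trans h3⟩, hy b ⟨h1.trans h2, h3⟩,
      ← intervalIntegral.integral_add_adjacent_intervals (hint a b) (hint b T)]
    ring
  have hyT : y T = h := by rw [hy T ⟨hT.le, le_rfl⟩]; simp
  have hup : ∀ t ∈ Icc (0:ℝ) T, y t - lam ≤ 0 := by
    apply aux_comp T (fun t => y t - lam) (by fun_prop) (by simp only [hyT]; linarith)
    intro a b h1 h2 h3 h4
    have : ∫ s in a..b, G s (y s) ≤ ∫ s in a..b, (0:ℝ) := by
      apply intervalIntegral.integral_mono_on h2 (hint a b) (by simp)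
      intro s hs
      have hs' : s ∈ Icc (0:ℝ) T := ⟨h1.trans hs.1, hs.2.trans h3⟩
      have hc : c s (y s) = lam := by
        have := h4 s hs
        simp only [c]
        rw [min_eq_right (by linarith), max_eq_right (hwl s hs')]
      simp only [G, F', hs', if_true, hc]
      exact hsup s hs'
    simp only [intervalIntegral.integral_zero] at this
    have := hyab a b h1 h2 h3
    linarith
  have hlow : ∀ t ∈ Icc (0:ℝ) T, w t - y t ≤ 0 := by
    apply aux_comp T (fun t => w t - y t) (by fun_prop) (by simp only [hyT]; linarith)
    intro a b h1 h2 h3 h4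
    have : ∫ s in a..b, g s ≤ ∫ s in a..b, G s (y s) := by
      apply intervalIntegral.integral_mono_on h2 (hg.intervalIntegrable _ _) (hint a b)
      intro s hs
      have hs' : s ∈ Icc (0:ℝ) T := ⟨h1.trans hs.1, hs.2.trans h3⟩
      have hc : c s (y s) = w s := by
        have := h4 s hs
        simp only [c]
        exact max_eq_left ((min_le_left _ _).trans (by linarith))
      simp only [G, F', hs', if_true, hc]
      exact hgF s hs'
    rw [hwg] at this
    have := hyab a b h1 h2 h3
    linarith
  have hb : ∀ t ∈ Icc (0:ℝ) T, w t ≤ y t ∧ y t ≤ lam := fun t ht =>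
    ⟨by linarith [hlow t ht], by linarith [hup t ht]⟩
  refine ⟨y, hyc, fun t ht => ?_, hb⟩
  rw [hy t ht]
  congr 1
  apply intervalIntegral.integral_congr
  intro s hs
  rw [uIcc_of_le ht.2] at hs
  have hs' : s ∈ Icc (0:ℝ) T := ⟨ht.1.trans hs.1, hs.2⟩
  have hc : c s (y s) = y s := by
    simp only [c]
    rw [min_eq_left (hb s hs').2, max_eq_right (hb s hs').1]
  simp only [G, F', hs', if_true, hc]

/-- Bounded solutions of the dominating ODEs under the one-sided smallness
condition with a supersolution level `λ ≥ h̄` (Theorem 5.5 (iii)). -/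
theorem stmt8
    (T : ℝ) (hT : 0 < T)
    (Fl Fu : ℝ → ℝ → ℝ)
    (hle : ∀ t ∈ Icc (0:ℝ) T, ∀ y : ℝ, Fl t y ≤ Fu t y)
    (hmeasu : ∀ y : ℝ, Measurable fun t => Fu t y)
    (hmeasl : ∀ y : ℝ, Measurable fun t => Fl t y)
    (hreg : ∀ M : ℝ, 0 < M → ∃ L K : ℝ,
      ∀ t ∈ Icc (0:ℝ) T,
        LipschitzOnWith (Real.toNNReal L) (fun y => Fu t y) (Icc (-M) M) ∧
        LipschitzOnWith (Real.toNNReal L) (fun y => Fl t y) (Icc (-M) M) ∧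
        ∀ y ∈ Icc (-M) M, |Fu t y| ≤ K ∧ |Fl t y| ≤ K)
    (hl hu : ℝ) (hlu : hl ≤ hu)
    (lam C1 C0 ε : ℝ) (hlam : hu ≤ lam) (hC1 : 0 < C1) (hC0 : 0 ≤ C0) (hε : 0 < ε)
    (hsup : ∀ t ∈ Icc (0:ℝ) T, Fu t lam ≤ 0)
    (hgrowl : ∀ t ∈ Icc (0:ℝ) T, ∀ y : ℝ, y ≤ 0 →
      2 * ε * y ^ 3 + C1 * y - C0 ≤ Fl t y)
    (hεsmall : 2 * ε *
        (Real.exp (C1 * T) * max (-hl) 0 +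
          ((C0 + 1) / C1) * (Real.exp (C1 * T) - 1)) ^ 3 ≤ 1) :
    ∃ yu yl : ℝ → ℝ,
      ContinuousOn yu (Icc 0 T) ∧ ContinuousOn yl (Icc 0 T) ∧
      (∀ t ∈ Icc (0:ℝ) T, yu t = hu + ∫ s in t..T, Fu s (yu s)) ∧
      (∀ t ∈ Icc (0:ℝ) T, yl t = hl + ∫ s in t..T, Fl s (yl s)) ∧
      (∀ t ∈ Icc (0:ℝ) T,
        -(Real.exp (C1 * T) * max (-hl) 0 +
          ((C0 + 1) / C1) * (Real.exp (C1 * T) - 1)) ≤ yl t ∧ yl t ≤ lam) ∧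
      (∀ t ∈ Icc (0:ℝ) T,
        -(Real.exp (C1 * T) * max (-hl) 0 +
          ((C0 + 1) / C1) * (Real.exp (C1 * T) - 1)) ≤ yu t ∧ yu t ≤ lam) := by
  set m := max (-hl) 0 with hm
  have hm0 : 0 ≤ m := le_max_right _ _
  have hml : -hl ≤ m := le_max_left _ _
  set A := (C0 + 1) / C1 with hA
  have hA0 : 0 ≤ A := by positivity
  have hAC : A * C1 = C0 + 1 := by rw [hA]; field_simp
  set C2 := Real.exp (C1 * T) * m + A * (Real.exp (C1 * T) - 1) with hC2
  let w : ℝ → ℝ := fun t => -(Real.exp (C1 * (T - t)) * m + A * (Real.exp (C1 * (T - t)) - 1))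
  let g : ℝ → ℝ := fun t => C1 * w t - (C0 + 1)
  have hw : Continuous w := by simp only [w]; fun_prop
  have hg : Continuous g := by simp only [g]; fun_prop
  have hwg : ∀ a b, ∫ s in a..b, g s = w a - w b := by
    intro a b
    have hd : ∀ s ∈ uIcc a b, HasDerivAt (fun s => - w s) (g s) s := by
      intro s _
      have h1 : HasDerivAt (fun s => Real.exp (C1 * (T - s))) (-(C1 * Real.exp (C1 * (T - s)))) s := by
        have := (((hasDerivAt_id s).const_sub T).const_mul C1).exp
        refine this.congr_deriv ?_
        simp only [id]; ring
      have h2 := ((h1.mul_const m).add ((h1.sub_const 1).const_mul A)).neg.neg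
      have h5 : HasDerivAt (fun s => - w s) _ s := h2
      refine h5.congr_deriv ?_
      simp only [g, w]
      rw [← hAC]; ring
    rw [intervalIntegral.integral_eq_sub_of_hasDerivAt hd (hg.intervalIntegrable _ _)]
    ring
  have hwT : w T = -m := by simp [w]
  have hexp1 : ∀ t ∈ Icc (0:ℝ) T, 1 ≤ Real.exp (C1 * (T - t)) := fun t ht =>
    Real.one_le_exp (mul_nonneg hC1.le (by linarith [ht.2]))
  have hwm : ∀ t ∈ Icc (0:ℝ) T, w t ≤ -m := by
    intro t ht
    have := hexp1 t ht
    simp only [w]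
    nlinarith
  have hwC : ∀ t ∈ Icc (0:ℝ) T, -C2 ≤ w t := by
    intro t ht
    have : Real.exp (C1 * (T - t)) ≤ Real.exp (C1 * T) :=
      Real.exp_le_exp.2 (by nlinarith [ht.1])
    simp only [w, hC2]
    nlinarith
  have hgl : ∀ t ∈ Icc (0:ℝ) T, g t ≤ Fl t (w t) := by
    intro t ht
    have h1 : w t ≤ 0 := (hwm t ht).trans (by linarith)
    refine le_trans ?_ (hgrowl t ht _ h1)
    have h2 : (- w t) ^ 3 ≤ C2 ^ 3 := pow_le_pow_left₀ (by linarith) (by linarith [hwC t ht]) 3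
    have h3 : 2 * ε * (- w t) ^ 3 ≤ 2 * ε * C2 ^ 3 := by gcongr
    have h4 : (- w t) ^ 3 = - (w t) ^ 3 := by ring
    rw [h4] at h3
    simp only [g]
    linarith
  obtain ⟨yu, hyu, hyu1, hyu2⟩ := aux_solve T hu lam hT Fu hmeasu
    (fun M hM => by
      obtain ⟨L, K, h⟩ := hreg M hM
      exact ⟨L, K, fun t ht => ⟨(h t ht).1, fun y hy => ((h t ht).2.2 y hy).1⟩⟩)
    w g hw hg hwg (by linarith) hlam (fun t ht => by linarith [hwm t ht])
    (fun t ht => (hgl t ht).trans (hle t ht _)) hsup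
  obtain ⟨yl, hyl, hyl1, hyl2⟩ := aux_solve T hl lam hT Fl hmeasl
    (fun M hM => by
      obtain ⟨L, K, h⟩ := hreg M hM
      exact ⟨L, K, fun t ht => ⟨(h t ht).2.1, fun y hy => ((h t ht).2.2 y hy).2⟩⟩)
    w g hw hg hwg (by linarith) (by linarith) (fun t ht => by linarith [hwm t ht])
    hgl (fun t ht => (hle t ht _).trans (hsup t ht))
  exact ⟨yu, yl, hyu.continuousOn, hyl.continuousOn, hyu1, hyl1,
    fun t ht => ⟨(hwC t ht).trans (hyl2 t ht).1, (hyl2 t ht).2⟩,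
    fun t ht => ⟨(hwC t ht).trans (hyu2 t ht).1, (hyu2 t ht).2⟩⟩
end

section
/- Let T > 0, let constants 0 < c₂ < c₃ and L > 0 be given, and let F̲, F̄ : [0,T] × ℝ → ℝ satisfy F̲ ≤ F̄ pointwise, with t ↦ F̄(t,y) and t ↦ F̲(t,y) Lebesgue measurable for each y, both F̄(t,·) and F̲(t,·) L-Lipschitz on [−c₃, c₃] for every t, and sup over t ∈ [0,T] and |y| ≤ c₃ of |F̄(t,y)| + |F̲(t,y)| finite. Let h̲ ≤ h̄ be real numbers with |h̲| ≤ c₂ and |h̄| ≤ c₂. Suppose ε > 0 satisfies F̄(t, c₃) ≤ ε and F̲(t, −c₃) ≥ −ε for all t ∈ [0,T], and ε(e^{LT} − 1)/L ≤ c₃ − c₂. Then the two dominating backward ODEs ȳ(t) = h̄ + ∫_t^T F̄(s, ȳ(s)) ds and y̲(t) = h̲ + ∫_t^T F̲(s, y̲(s)) ds admit continuous solutions ȳ, y̲ on [0,T] with −c₃ ≤ y̲(t) ≤ ȳ(t) ≤ c₃ for all t ∈ [0,T]. -/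
open MeasureTheory Set

lemma aux_ii (f : ℝ → ℝ → ℝ) (L K : ℝ) (hm : ∀ y, Measurable fun t => f t y)
    (hlip : ∀ t y z, |f t y - f t z| ≤ L * |y - z|) (hK : ∀ t y, |f t y| ≤ K)
    (v : ℝ → ℝ) (hv : Continuous v) (a b : ℝ) :
    IntervalIntegrable (fun s => f s (v s)) volume a b := by
  have hc : ∀ t, Continuous fun y => f t y := by
    intro t
    have : LipschitzWith (Real.toNNReal L) (fun y => f t y) := by
      apply LipschitzWith.of_dist_le_mul
      intro y z
      rw [Real.dist_eq, Real.dist_eq]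
      exact (hlip t y z).trans (mul_le_mul_of_nonneg_right (Real.le_coe_toNNReal L) (abs_nonneg _))
    exact this.continuous
  have hmeas : Measurable (fun s => f s (v s)) := by
    have h1 : Measurable (Function.uncurry (fun y t => f t y)) :=
      measurable_uncurry_of_continuous_of_measurable (fun t => hc t) (fun y => hm y)
    exact h1.comp (hv.measurable.prodMk measurable_id)
  have h0 : IntervalIntegrable (fun _ : ℝ => K) volume a b := intervalIntegrable_const
  refine h0.mono_fun hmeas.aestronglyMeasurable ?_
  refine Filter.Eventually.of_forall fun s => ?_
  simp only [Real.norm_eq_abs]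
  exact (hK s _).trans (le_abs_self K)

lemma aux_int_exp (lam a b : ℝ) (hl : lam ≠ 0) :
    ∫ s in a..b, Real.exp (lam * s) = (Real.exp (lam * b) - Real.exp (lam * a)) / lam := by
  rw [intervalIntegral.integral_eq_sub_of_hasDerivAt (f := fun s => Real.exp (lam * s) / lam)]
  · ring
  · intro x _
    have := (((hasDerivAt_id x).const_mul lam).exp).div_const lam
    refine this.congr_deriv ?_
    simp only [id]; field_simp
  · exact (Continuous.intervalIntegrable (by fun_prop) _ _)

lemma aux_exist (T L K h : ℝ) (hT : 0 < T) (hL : 0 < L) (f : ℝ → ℝ → ℝ)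
    (hm : ∀ y, Measurable fun t => f t y)
    (hlip : ∀ t y z, |f t y - f t z| ≤ L * |y - z|) (hK : ∀ t y, |f t y| ≤ K) :
    ∃ Y : ℝ → ℝ, Continuous Y ∧ ∀ t ∈ Icc (0:ℝ) T, Y t = h + ∫ s in (0:ℝ)..t, f s (Y s) := by
  have hK0 : 0 ≤ K := (abs_nonneg _).trans (hK 0 0)
  let p : ℝ → ℝ := fun t => max 0 (min T t)
  have hpc : Continuous p := by fun_prop
  have hp0 : ∀ t, 0 ≤ p t := fun t => le_max_left _ _
  have hpT : ∀ t, p t ≤ T := fun t => max_le hT.le (min_le_left _ _)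
  have hpe : ∀ t ∈ Icc (0:ℝ) T, p t = t := fun t ht => by
    simp only [p]; rw [min_eq_right ht.2, max_eq_right ht.1]
  let V : BoundedContinuousFunction ℝ ℝ → ℝ → ℝ := fun u s => Real.exp (2 * L * s) * u s
  have hV : ∀ u, Continuous (V u) := fun u => by
    have := u.continuous
    simp only [V]; fun_prop
  have hii : ∀ u a b, IntervalIntegrable (fun s => f s (V u s)) volume a b :=
    fun u a b => aux_ii f L K hm hlip hK (V u) (hV u) a b
  let P : BoundedContinuousFunction ℝ ℝ → ℝ → ℝ := fun u t =>
    Real.exp (-(2 * L * p t)) * (h + ∫ s in (0:ℝ)..(p t), f s (V u s))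
  have hPc : ∀ u, Continuous (P u) := fun u => by
    have h1 : Continuous fun x => ∫ s in (0:ℝ)..x, f s (V u s) :=
      intervalIntegral.continuous_primitive (fun a b => hii u a b) 0
    have h2 := h1.comp hpc
    simp only [Function.comp_def] at h2
    simp only [P]; fun_prop
  have hPb : ∀ u t, ‖P u t‖ ≤ |h| + K * T := fun u t => by
    have h1 : ‖∫ s in (0:ℝ)..(p t), f s (V u s)‖ ≤ K * |p t - 0| :=
      intervalIntegral.norm_integral_le_of_norm_le_const (fun s _ => hK _ _)
    rw [sub_zero, abs_of_nonneg (hp0 t)] at h1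
    have h2 : Real.exp (-(2 * L * p t)) ≤ 1 := by
      rw [Real.exp_le_one_iff]; have := hp0 t; have := mul_nonneg hL.le this; linarith
    have h3 : K * p t ≤ K * T := mul_le_mul_of_nonneg_left (hpT t) hK0
    simp only [P]
    rw [norm_mul, Real.norm_eq_abs, Real.abs_exp]
    have h4 := norm_add_le h (∫ s in (0:ℝ)..(p t), f s (V u s))
    rw [Real.norm_eq_abs h] at h4
    calc _ ≤ 1 * ‖h + ∫ s in (0:ℝ)..(p t), f s (V u s)‖ :=
          mul_le_mul_of_nonneg_right h2 (norm_nonneg _)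
      _ ≤ _ := by linarith
  let Φ : BoundedContinuousFunction ℝ ℝ → BoundedContinuousFunction ℝ ℝ := fun u =>
    BoundedContinuousFunction.ofNormedAddCommGroup (P u) (hPc u) _ (hPb u)
  have hΦ : ContractingWith (1/2 : NNReal) Φ := by
    refine ⟨by rw [← NNReal.coe_lt_coe]; norm_num, LipschitzWith.of_dist_le_mul fun u w => ?_⟩
    have hd0 : 0 ≤ dist u w := dist_nonneg
    rw [BoundedContinuousFunction.dist_le (by positivity)]
    intro t
    change dist (P u t) (P w t) ≤ _
    have e1 : P u t - P w t = Real.exp (-(2 * L * p t)) *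
        ∫ s in (0:ℝ)..(p t), (f s (V u s) - f s (V w s)) := by
      rw [intervalIntegral.integral_sub (hii u _ _) (hii w _ _)]
      simp only [P]; ring
    have e2 : ‖∫ s in (0:ℝ)..(p t), (f s (V u s) - f s (V w s))‖ ≤
        ∫ s in (0:ℝ)..(p t), L * dist u w * Real.exp (2 * L * s) := by
      apply intervalIntegral.norm_integral_le_of_norm_le (hp0 t)
      · refine Filter.Eventually.of_forall fun s _ => ?_
        rw [Real.norm_eq_abs]
        refine (hlip _ _ _).trans ?_
        have : V u s - V w s = Real.exp (2 * L * s) * (u s - w s) := by simp only [V]; ring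
        rw [this, abs_mul, Real.abs_exp]
        have h5 : |u s - w s| ≤ dist u w := by
          rw [← Real.dist_eq]; exact BoundedContinuousFunction.dist_coe_le_dist s
        have h6 := mul_le_mul_of_nonneg_left h5 (mul_nonneg hL.le (Real.exp_pos (2 * L * s)).le)
        linarith
      · exact Continuous.intervalIntegrable (by fun_prop) _ _
    rw [intervalIntegral.integral_const_mul, aux_int_exp _ _ _ (by positivity)] at e2
    rw [Real.dist_eq, e1, abs_mul, Real.abs_exp]
    rw [Real.norm_eq_abs] at e2
    have e3 := mul_le_mul_of_nonneg_left e2 (Real.exp_pos (-(2 * L * p t))).le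
    refine e3.trans ?_
    have e4 : Real.exp (-(2 * L * p t)) * Real.exp (2 * L * p t) = 1 := by
      rw [← Real.exp_add]; simp
    have e5 : Real.exp (-(2 * L * p t)) * (L * dist u w * ((Real.exp (2 * L * p t) - Real.exp (2 * L * 0)) / (2 * L)))
        = dist u w / 2 * (Real.exp (-(2 * L * p t)) * Real.exp (2 * L * p t) - Real.exp (-(2 * L * p t))) := by
      simp only [mul_zero, Real.exp_zero]
      field_simp
    rw [e5, e4]
    have e6 := mul_nonneg hd0 (Real.exp_pos (-(2 * L * p t))).le
    push_cast
    linarith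
  let u := ContractingWith.fixedPoint Φ hΦ
  have hu : Φ u = u := hΦ.fixedPoint_isFixedPt
  refine ⟨V u, hV u, fun t ht => ?_⟩
  have h1 : P u t = u t := congrArg (fun g : BoundedContinuousFunction ℝ ℝ => g t) hu
  have h2 : V u t = Real.exp (2 * L * t) * P u t := by rw [h1]
  rw [h2]
  simp only [P]
  rw [hpe t ht, ← mul_assoc, ← Real.exp_add]
  simp

lemma aux_comp_s9 (T L w0 : ℝ) (hL : 0 < L) (w q : ℝ → ℝ)
    (hw : Continuous w) (hq : ∀ a b, IntervalIntegrable q volume a b) (hw0 : 0 ≤ w0)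
    (heq : ∀ t ∈ Icc (0:ℝ) T, w t = w0 + ∫ s in (0:ℝ)..t, q s)
    (hge : ∀ t ∈ Icc (0:ℝ) T, -(L * |w t|) ≤ q t) :
    ∀ t ∈ Icc (0:ℝ) T, 0 ≤ w t := by
  intro t1 ht1
  by_contra hneg
  push Not at hneg
  have hT : 0 ≤ T := ht1.1.trans ht1.2
  obtain ⟨t, ht, hmin⟩ := (isCompact_Icc (a := (0:ℝ)) (b := T)).exists_isMinOn
    ⟨t1, ht1⟩ (f := fun s => Real.exp (-(L * s)) * w s) (by fun_prop)
  set m := Real.exp (-(L * t)) * w t with hmdef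
  have hm : ∀ s ∈ Icc (0:ℝ) T, m ≤ Real.exp (-(L * s)) * w s := fun s hs => hmin hs
  have hmneg : m < 0 := (hm t1 ht1).trans_lt (mul_neg_of_pos_of_neg (Real.exp_pos _) hneg)
  have hexp : ∀ s, Real.exp (L * s) * Real.exp (-(L * s)) = 1 := fun s => by
    rw [← Real.exp_add]; simp
  have hlow : ∀ s ∈ Icc (0:ℝ) T, m * Real.exp (L * s) ≤ w s := fun s hs => by
    have := mul_le_mul_of_nonneg_left (hm s hs) (Real.exp_pos (L * s)).le
    have h7 := hexp s
    have h8 : Real.exp (L * s) * (Real.exp (-(L * s)) * w s) = w s := by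
      rw [← mul_assoc, h7, one_mul]
    rw [h8] at this
    linarith
  have hwt : w t = m * Real.exp (L * t) := by
    rw [hmdef]; linear_combination (-(w t)) * hexp t
  have hw0' : w 0 = w0 := by rw [heq 0 ⟨le_rfl, hT⟩]; simp
  have hS : IsCompact (Icc (0:ℝ) t ∩ {s | 0 ≤ w s}) :=
    isCompact_Icc.inter_right (isClosed_le continuous_const hw)
  obtain ⟨a, ⟨ha, haw⟩, hamax⟩ := hS.exists_isGreatest ⟨0, ⟨le_rfl, ht.1⟩, by simpa [hw0'] using hw0⟩
  have haT : a ∈ Icc (0:ℝ) T := ⟨ha.1, ha.2.trans ht.2⟩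
  have hdiff : w t = w a + ∫ s in a..t, q s := by
    rw [heq t ht, heq a haT, ← intervalIntegral.integral_add_adjacent_intervals (hq 0 a) (hq a t)]
    ring
  have hle : ∫ s in a..t, (L * m) * Real.exp (L * s) ≤ ∫ s in a..t, q s := by
    apply intervalIntegral.integral_mono_on_of_le_Ioo ha.2
      (Continuous.intervalIntegrable (by fun_prop) _ _) (hq _ _)
    intro s hs
    have hsT : s ∈ Icc (0:ℝ) T := ⟨ha.1.trans hs.1.le, hs.2.le.trans ht.2⟩
    have hsn : w s < 0 := by
      by_contra hcon
      push Not at hcon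
      have := hamax ⟨⟨hsT.1, hs.2.le⟩, hcon⟩
      linarith [hs.1]
    have h1 := hge s hsT
    rw [abs_of_neg hsn] at h1
    have h2 := mul_le_mul_of_nonneg_left (hlow s hsT) hL.le
    linarith
  rw [intervalIntegral.integral_const_mul, aux_int_exp _ _ _ hL.ne'] at hle
  have e : L * m * ((Real.exp (L * t) - Real.exp (L * a)) / L) =
    m * Real.exp (L * t) - m * Real.exp (L * a) := by field_simp
  rw [e] at hle
  have := mul_neg_of_neg_of_pos hmneg (Real.exp_pos (L * a))
  have haw' : 0 ≤ w a := haw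
  linarith

lemma aux_bound (T L c2 c3 ε h : ℝ) (hT : 0 < T) (hL : 0 < L) (hε : 0 < ε) (hc : c2 < c3)
    (hh : h ≤ c2) (hs : ε * (Real.exp (L * T) - 1) / L ≤ c3 - c2)
    (Y g : ℝ → ℝ) (hY : Continuous Y) (hg : ∀ a b, IntervalIntegrable g volume a b)
    (heq : ∀ t ∈ Icc (0:ℝ) T, Y t = h + ∫ s in (0:ℝ)..t, g s)
    (hgle : ∀ t ∈ Icc (0:ℝ) T, g t ≤ ε + L * |c3 - Y t|) :
    ∀ t ∈ Icc (0:ℝ) T, Y t ≤ c3 := by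
  let φ : ℝ → ℝ := fun t => (c3 - c2 + ε / L) * Real.exp (-(L * t)) - ε / L
  have hφc : Continuous φ := by simp only [φ]; fun_prop
  have hφ0 : ∀ t ∈ Icc (0:ℝ) T, 0 ≤ φ t := by
    intro t ht
    have h1 : Real.exp (L * t) ≤ Real.exp (L * T) :=
      Real.exp_le_exp.2 (mul_le_mul_of_nonneg_left ht.2 hL.le)
    have h2 : Real.exp (L * t) * Real.exp (-(L * t)) = 1 := by rw [← Real.exp_add]; simp
    have h3 : ε / L * Real.exp (L * t) ≤ ε / L * Real.exp (L * T) :=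
      mul_le_mul_of_nonneg_left h1 (by positivity)
    have h4 : ε * (Real.exp (L * T) - 1) / L = ε / L * Real.exp (L * T) - ε / L := by ring
    have h5 : ε / L * Real.exp (L * t) ≤ c3 - c2 + ε / L := by linarith
    have h6 := mul_le_mul_of_nonneg_right h5 (Real.exp_pos (-(L * t))).le
    rw [mul_assoc, h2] at h6
    simp only [φ]; linarith
  have hφd : ∀ t, HasDerivAt φ (-ε - L * φ t) t := by
    intro t
    have := ((((hasDerivAt_id t).const_mul L).neg.exp).const_mul (c3 - c2 + ε / L)).sub_const (ε / L)
    refine this.congr_deriv ?_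
    simp only [φ, id, Pi.neg_apply]; field_simp; ring
  have hφi : ∀ t, ∫ s in (0:ℝ)..t, (-ε - L * φ s) = φ t - φ 0 := fun t =>
    intervalIntegral.integral_eq_sub_of_hasDerivAt (fun x _ => hφd x)
      (Continuous.intervalIntegrable (by fun_prop) _ _)
  have hφz : φ 0 = c3 - c2 := by simp [φ]
  have hii : ∀ a b, IntervalIntegrable (fun s => -ε - L * φ s) volume a b :=
    fun a b => Continuous.intervalIntegrable (by fun_prop) _ _
  have key := aux_comp_s9 T L (c2 - h) hL (fun t => c3 - Y t - φ t)
    (fun s => -g s - (-ε - L * φ s)) (by fun_prop)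
    (fun a b => (hg a b).neg.sub (hii a b)) (by linarith)
    (fun t ht => by
      have e1 : ∫ s in (0:ℝ)..t, (-g s - (-ε - L * φ s)) =
          (∫ s in (0:ℝ)..t, -g s) - ∫ s in (0:ℝ)..t, (-ε - L * φ s) :=
        intervalIntegral.integral_sub (hg 0 t).neg (hii 0 t)
      rw [e1, hφi, hφz, intervalIntegral.integral_neg]
      have := heq t ht
      linarith)
    (fun t ht => by
      have h1 := hgle t ht
      have h2 : |c3 - Y t| ≤ |c3 - Y t - φ t| + φ t := by
        have := abs_add_le (c3 - Y t - φ t) (φ t)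
        rw [abs_of_nonneg (hφ0 t ht)] at this
        simpa using this
      have h3 := mul_le_mul_of_nonneg_left h2 hL.le
      linarith)
  intro t ht
  have := key t ht
  have := hφ0 t ht
  linarith

/-- Bounded solutions of the dominating ODEs in the case `|σ₃| ≤ c₁`,
`|h| ≤ c₂`, `c₁c₃ < 1` (Theorem 5.7). -/
theorem stmt9
    (T c2 c3 L : ℝ) (hT : 0 < T) (hc2 : 0 < c2) (hc23 : c2 < c3) (hL : 0 < L)
    (Fl Fu : ℝ → ℝ → ℝ)
    (hle : ∀ t ∈ Icc (0:ℝ) T, ∀ y : ℝ, Fl t y ≤ Fu t y)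
    (hmeasu : ∀ y : ℝ, Measurable fun t => Fu t y)
    (hmeasl : ∀ y : ℝ, Measurable fun t => Fl t y)
    (hLipu : ∀ t ∈ Icc (0:ℝ) T,
      LipschitzOnWith (Real.toNNReal L) (fun y => Fu t y) (Icc (-c3) c3))
    (hLipl : ∀ t ∈ Icc (0:ℝ) T,
      LipschitzOnWith (Real.toNNReal L) (fun y => Fl t y) (Icc (-c3) c3))
    (hbdd : ∃ K : ℝ, ∀ t ∈ Icc (0:ℝ) T, ∀ y ∈ Icc (-c3) c3,
      |Fu t y| + |Fl t y| ≤ K)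
    (hl hu : ℝ) (hlu : hl ≤ hu) (hhl : |hl| ≤ c2) (hhu : |hu| ≤ c2)
    (ε : ℝ) (hε : 0 < ε)
    (hFu : ∀ t ∈ Icc (0:ℝ) T, Fu t c3 ≤ ε)
    (hFl : ∀ t ∈ Icc (0:ℝ) T, -ε ≤ Fl t (-c3))
    (hεsmall : ε * (Real.exp (L * T) - 1) / L ≤ c3 - c2) :
    ∃ yu yl : ℝ → ℝ,
      ContinuousOn yu (Icc 0 T) ∧ ContinuousOn yl (Icc 0 T) ∧
      (∀ t ∈ Icc (0:ℝ) T, yu t = hu + ∫ s in t..T, Fu s (yu s)) ∧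
      (∀ t ∈ Icc (0:ℝ) T, yl t = hl + ∫ s in t..T, Fl s (yl s)) ∧
      (∀ t ∈ Icc (0:ℝ) T, -c3 ≤ yl t ∧ yl t ≤ yu t ∧ yu t ≤ c3) := by
  obtain ⟨K, hK⟩ := hbdd
  let p : ℝ → ℝ := fun t => max 0 (min T (T - t))
  have hpm : Measurable p := (by fun_prop : Continuous p).measurable
  have hp : ∀ t, p t ∈ Icc (0:ℝ) T := fun t =>
    ⟨le_max_left _ _, max_le hT.le (min_le_left _ _)⟩
  have hpe : ∀ t ∈ Icc (0:ℝ) T, p t = T - t := fun t ht => by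
    simp only [p]
    rw [min_eq_right (by linarith [ht.1]), max_eq_right (by linarith [ht.2])]
  let r : ℝ → ℝ := fun y => max (-c3) (min c3 y)
  have hr : ∀ y, r y ∈ Icc (-c3) c3 := fun y =>
    ⟨le_max_left _ _, max_le (by linarith) (min_le_left _ _)⟩
  have hre : ∀ y ∈ Icc (-c3) c3, r y = y := fun y hy => by
    simp only [r]; rw [min_eq_right hy.2, max_eq_right hy.1]
  have hrl : ∀ y z, |r y - r z| ≤ |y - z| := fun y z => by
    simp only [r]
    refine (abs_max_sub_max_le_abs _ _ (-c3)).trans' (le_of_eq (by rw [max_comm (-c3), max_comm (-c3)])) |>.trans ?_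
    rw [min_comm c3, min_comm c3]
    have h9 := abs_min_sub_min_le_max y c3 z c3
    simpa using h9
  have hlipG : ∀ F : ℝ → ℝ → ℝ, (∀ t ∈ Icc (0:ℝ) T,
      LipschitzOnWith (Real.toNNReal L) (fun y => F t y) (Icc (-c3) c3)) →
      ∀ t y z, |F (p t) (r y) - F (p t) (r z)| ≤ L * |y - z| := by
    intro F hF t y z
    have h1 := (hF (p t) (hp t)).dist_le_mul (r y) (hr y) (r z) (hr z)
    rw [Real.dist_eq, Real.dist_eq, Real.coe_toNNReal L hL.le] at h1
    exact h1.trans (mul_le_mul_of_nonneg_left (hrl y z) hL.le)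
  have lu := hlipG Fu hLipu
  have ll := hlipG Fl hLipl
  have mu : ∀ y, Measurable fun t => Fu (p t) (r y) := fun y => (hmeasu (r y)).comp hpm
  have ml : ∀ y, Measurable fun t => Fl (p t) (r y) := fun y => (hmeasl (r y)).comp hpm
  have ku : ∀ t y, |Fu (p t) (r y)| ≤ K := fun t y => by
    have := hK _ (hp t) _ (hr y); have := abs_nonneg (Fl (p t) (r y)); linarith
  have kl : ∀ t y, |Fl (p t) (r y)| ≤ K := fun t y => by
    have := hK _ (hp t) _ (hr y); have := abs_nonneg (Fu (p t) (r y)); linarith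
  obtain ⟨U, hUc, hU⟩ := aux_exist T L K hu hT hL (fun t y => Fu (p t) (r y)) mu lu ku
  obtain ⟨W, hWc, hW⟩ := aux_exist T L K hl hT hL (fun t y => Fl (p t) (r y)) ml ll kl
  have iU := aux_ii (fun t y => Fu (p t) (r y)) L K mu lu ku U hUc
  have iW := aux_ii (fun t y => Fl (p t) (r y)) L K ml ll kl W hWc
  have hc3 : r c3 = c3 := hre _ ⟨by linarith, le_rfl⟩
  have hc3' : r (-c3) = -c3 := hre _ ⟨le_rfl, by linarith⟩
  have bU : ∀ t ∈ Icc (0:ℝ) T, U t ≤ c3 := by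
    refine aux_bound T L c2 c3 ε hu hT hL hε hc23 (abs_le.1 hhu).2 hεsmall U _ hUc iU hU ?_
    intro t _
    have h1 := (abs_le.1 (lu t c3 (U t))).1
    have h2 := hFu _ (hp t)
    rw [hc3] at h1
    linarith
  have bW : ∀ t ∈ Icc (0:ℝ) T, -W t ≤ c3 := by
    refine aux_bound T L c2 c3 ε (-hl) hT hL hε hc23 (by linarith [(abs_le.1 hhl).1]) hεsmall
      (fun t => -W t) (fun t => -Fl (p t) (r (W t))) hWc.neg (fun a b => (iW a b).neg) ?_ ?_
    · intro t ht
      rw [hW t ht, intervalIntegral.integral_neg]; ring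
    intro t _
    have h1 := (abs_le.1 (ll t (-c3) (W t))).2
    have h2 := hFl _ (hp t)
    rw [hc3', show -c3 - W t = -(c3 - -W t) by ring, abs_neg] at h1
    linarith
  have cmp : ∀ t ∈ Icc (0:ℝ) T, 0 ≤ U t - W t := by
    refine aux_comp_s9 T L (hu - hl) hL (fun t => U t - W t)
      (fun t => Fu (p t) (r (U t)) - Fl (p t) (r (W t))) (hUc.sub hWc)
      (fun a b => (iU a b).sub (iW a b)) (by linarith) ?_ ?_
    · intro t ht
      rw [intervalIntegral.integral_sub (iU 0 t) (iW 0 t), hU t ht, hW t ht]; ring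
    · intro t _
      have h1 := (abs_le.1 (lu t (U t) (W t))).1
      have h2 := hle _ (hp t) (r (W t))
      linarith
  have fin : ∀ (F : ℝ → ℝ → ℝ) (Y : ℝ → ℝ) (h : ℝ),
      (∀ t ∈ Icc (0:ℝ) T, Y t = h + ∫ s in (0:ℝ)..t, F (p s) (r (Y s))) →
      (∀ t ∈ Icc (0:ℝ) T, Y t ∈ Icc (-c3) c3) →
      ∀ t ∈ Icc (0:ℝ) T, Y (T - t) = h + ∫ s in t..T, F s (Y (T - s)) := by
    intro F Y h hY hb t ht
    have htt : T - t ∈ Icc (0:ℝ) T := ⟨by linarith [ht.2], by linarith [ht.1]⟩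
    rw [hY _ htt]
    congr 1
    have e := intervalIntegral.integral_comp_sub_left (a := t) (b := T)
      (fun s => F (T - s) (Y s)) T
    simp only [sub_sub_cancel, sub_self] at e
    rw [e]
    apply intervalIntegral.integral_congr
    intro s hs
    rw [uIcc_of_le htt.1] at hs
    have hsT : s ∈ Icc (0:ℝ) T := ⟨hs.1, hs.2.trans htt.2⟩
    beta_reduce
    rw [hpe s hsT, hre _ (hb s hsT)]
  refine ⟨fun t => U (T - t), fun t => W (T - t), by fun_prop, by fun_prop,
    fin Fu U hu hU fun t ht => ⟨?_, bU t ht⟩, fin Fl W hl hW fun t ht => ⟨?_, ?_⟩, ?_⟩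
  · linarith [bW t ht, cmp t ht]
  · linarith [bW t ht]
  · linarith [bU t ht, cmp t ht]
  · intro t ht
    have htt : T - t ∈ Icc (0:ℝ) T := ⟨by linarith [ht.2], by linarith [ht.1]⟩
    refine ⟨?_, ?_, bU _ htt⟩
    · linarith [bW _ htt]
    · linarith [cmp _ htt]
end

section
/- Let ε > 0, m ∈ ℝ, h < m, and T ≥ (m − h)²/(2ε). Then there is no continuous function y : [0,T] → ℝ with y(t) < m for all t ∈ [0,T] satisfying y(t) = h + ∫_t^T ε/(m − y(s)) ds for all t ∈ [0,T]. (Indeed, any such solution must satisfy (m − y(t))² = (m − h)² − 2ε(T − t), which reaches 0 at t = T − (m − h)²/(2ε).) -/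
open MeasureTheory Set

theorem key_aux (ε m h T : ℝ) (hT0 : 0 ≤ T) (y : ℝ → ℝ) (hc : ContinuousOn y (Icc 0 T))
    (hlt : ∀ t ∈ Icc (0:ℝ) T, y t < m)
    (hy : ∀ t ∈ Icc (0:ℝ) T, y t = h + ∫ s in t..T, ε / (m - y s)) :
    ∀ t ∈ Icc (0:ℝ) T, (m - y t) ^ 2 = (m - h) ^ 2 - 2 * ε * (T - t) := by
  have hfc : ContinuousOn (fun s => ε / (m - y s)) (Icc 0 T) :=
    continuousOn_const.div (continuousOn_const.sub hc) fun s hs => (sub_pos.2 (hlt s hs)).ne'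
  set F : ℝ → ℝ := IccExtend hT0 ((Icc 0 T).domRestrict (fun s => ε / (m - y s))) with hF
  have hFc : Continuous F := (continuousOn_iff_continuous_domRestrict.1 hfc).Icc_extend'
  have hFe : ∀ s ∈ Icc (0:ℝ) T, F s = ε / (m - y s) := fun s hs => by
    rw [hF, IccExtend_of_mem _ _ hs]; rfl
  have hY : ∀ t ∈ Icc (0:ℝ) T, y t = h + ∫ s in t..T, F s := fun t ht => by
    rw [hy t ht]
    congr 1
    apply intervalIntegral.integral_congr
    intro s hs
    rw [uIcc_of_le ht.2] at hs
    exact (hFe s ⟨ht.1.trans hs.1, hs.2⟩).symm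
  have hd : ∀ t, HasDerivAt (fun t => h + ∫ s in t..T, F s) (-F t) t := fun t =>
    (intervalIntegral.integral_hasDerivAt_left (hFc.intervalIntegrable _ _)
      (hFc.stronglyMeasurableAtFilter _ _) hFc.continuousAt).const_add h
  have hG : ∀ t, HasDerivAt (fun t => (m - (h + ∫ s in t..T, F s)) ^ 2 - 2 * ε * t)
      (2 * (m - (h + ∫ s in t..T, F s)) * F t - 2 * ε) t := fun t => by
    have := (((hd t).const_sub m).pow 2).sub ((hasDerivAt_id t).const_mul (2 * ε))
    refine HasDerivAt.congr_deriv this ?_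
    simp only [Nat.cast_ofNat]; ring
  have hcst := constant_of_has_deriv_right_zero
    (f := fun t => (m - (h + ∫ s in t..T, F s)) ^ 2 - 2 * ε * t) (a := 0) (b := T)
    (fun t _ => (hG t).continuousAt.continuousWithinAt) (fun t ht => by
      have ht' : t ∈ Icc (0:ℝ) T := ⟨ht.1, ht.2.le⟩
      have h1 := (hG t).hasDerivWithinAt (s := Ici t)
      have h2 := (sub_pos.2 (hlt t ht')).ne'
      rw [← hY t ht', hFe t ht'] at h1
      convert h1 using 1
      field_simp
      ring)
  intro t ht
  have h1 := hcst t ht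
  have h2 := hcst T ⟨hT0, le_rfl⟩
  simp only [intervalIntegral.integral_same] at h1 h2
  rw [← hY t ht] at h1
  linarith

/-- Explicit singularity example: the backward ODE with generator `ε/(m − y)`
has no solution staying below the singular level `m` once
`T ≥ (m − h)²/(2ε)`; any such solution would satisfy
`(m − y(t))² = (m − h)² − 2ε(T − t)`. -/
theorem stmt15
    (ε m h T : ℝ) (hε : 0 < ε) (hhm : h < m)
    (hT : (m - h) ^ 2 / (2 * ε) ≤ T) :
    (¬ ∃ y : ℝ → ℝ, ContinuousOn y (Icc 0 T) ∧
        (∀ t ∈ Icc (0:ℝ) T, y t < m) ∧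
        ∀ t ∈ Icc (0:ℝ) T, y t = h + ∫ s in t..T, ε / (m - y s)) ∧
    (∀ y : ℝ → ℝ, ContinuousOn y (Icc 0 T) →
      (∀ t ∈ Icc (0:ℝ) T, y t < m) →
      (∀ t ∈ Icc (0:ℝ) T, y t = h + ∫ s in t..T, ε / (m - y s)) →
      ∀ t ∈ Icc (0:ℝ) T, (m - y t) ^ 2 = (m - h) ^ 2 - 2 * ε * (T - t)) := by
  have hT0 : 0 ≤ T := le_trans (by positivity) hT
  refine ⟨?_, fun y => key_aux ε m h T hT0 y⟩
  rintro ⟨y, hc, hlt, hy⟩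
  have h0 : (0:ℝ) ∈ Icc 0 T := ⟨le_rfl, hT0⟩
  have h1 := key_aux ε m h T hT0 y hc hlt hy 0 h0
  have h2 := pow_pos (sub_pos.2 (hlt 0 h0)) 2
  rw [div_le_iff₀ (by positivity)] at hT
  nlinarith
end

section
/- Define ψ₁, ψ₂ : [2, ∞) → ℝ by ψ₁(2) = ψ₂(2) = 1 and, for p > 2, ψ₁(p) = 2^{−1/p} p^{1/2} ((2^{p/2} − 2)/(p − 2))^{1/2 − 1/p} and ψ₂(p) = ((p−1)/2)^{1/p} p^{1/2} (2^{p/2} + (2^{p/2} − 2)/(p − 2))^{1/2 − 1/p}. Then, for i = 1, 2, the function ψᵢ is continuous on [2, ∞), strictly increasing on [2, ∞), satisfies ψᵢ(2) = 1, and ψᵢ(p) → ∞ as p → ∞. -/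
open Set Filter Real

theorem aux_gen (ψ A G : ℝ → ℝ) (h2 : ψ 2 = 1) (hA2 : A 2 = 0)
    (hAc : ContinuousOn A (Ici 2)) (hAm : StrictMonoOn A (Ici 2))
    (hAt : Tendsto A atTop atTop)
    (hGc : ContinuousOn G (Ioi 2)) (hGm : MonotoneOn G (Ioi 2))
    (hG0 : ∀ p, 2 < p → 0 ≤ G p)
    (hψ : ∀ p, 2 < p → ψ p = exp (A p + (1 / 2 - 1 / p) * G p)) :
    ContinuousOn ψ (Ici 2) ∧ StrictMonoOn ψ (Ici 2) ∧ ψ 2 = 1 ∧ Tendsto ψ atTop atTop := by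
  have hE : EqOn ψ (fun p => exp (A p + (1 / 2 - 1 / p) * G p)) (Ici 2) := by
    intro p hp
    rcases eq_or_lt_of_le (mem_Ici.1 hp) with h | h
    · subst h; simp [h2, hA2]
    · exact hψ p h
  have hc : ∀ p : ℝ, 2 < p → 0 < 1 / 2 - 1 / p := by
    intro p hp
    have := one_div_lt_one_div_of_lt (by norm_num : (0:ℝ) < 2) hp
    linarith
  have hcc : ContinuousOn (fun p : ℝ => 1 / 2 - 1 / p) (Ici 2) := by
    apply ContinuousOn.sub continuousOn_const
    apply ContinuousOn.div continuousOn_const continuousOn_id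
    intro x hx
    have : (2:ℝ) ≤ x := hx
    simp; linarith
  refine ⟨?_, ?_, h2, ?_⟩
  · refine ContinuousOn.congr ?_ hE
    refine continuous_exp.comp_continuousOn (hAc.add ?_)
    intro p hp
    rcases eq_or_lt_of_le (mem_Ici.1 hp) with h | h
    · subst h
      have h0 : (1 / 2 - 1 / (2:ℝ)) * G 2 = 0 := by norm_num
      unfold ContinuousWithinAt
      simp only [h0]
      have hl : Tendsto (fun p : ℝ => (1 / 2 - 1 / p) * G 3) (nhdsWithin 2 (Ici 2)) (nhds 0) := by
        have := (hcc 2 (by simp)).tendsto.mul_const (G 3)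
        simpa using this
      have hnb : ∀ᶠ p : ℝ in nhdsWithin 2 (Ici 2), p < 3 :=
        mem_nhdsWithin_of_mem_nhds (Iio_mem_nhds (by norm_num))
      refine tendsto_of_tendsto_of_tendsto_of_le_of_le' tendsto_const_nhds hl ?_ ?_
      · filter_upwards [self_mem_nhdsWithin] with p hp
        rcases eq_or_lt_of_le (mem_Ici.1 hp) with h | h
        · subst h; norm_num
        · exact mul_nonneg (hc p h).le (hG0 p h)
      · filter_upwards [self_mem_nhdsWithin, hnb] with p hp h3
        rcases eq_or_lt_of_le (mem_Ici.1 hp) with h | h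
        · subst h; norm_num
        · exact mul_le_mul_of_nonneg_left (hGm h (by norm_num : (2:ℝ) < 3) h3.le) (hc p h).le
    · have h1 : ContinuousAt G p := hGc.continuousAt (Ioi_mem_nhds h)
      have h3 : ContinuousAt (fun p : ℝ => 1 / 2 - 1 / p) p := hcc.continuousAt (Ici_mem_nhds h)
      exact (h3.mul h1).continuousWithinAt
  · intro p hp q hq hpq
    rw [hE hp, hE hq]
    apply exp_lt_exp.2
    apply add_lt_add_of_lt_of_le (hAm hp hq hpq)
    have hq2 : 2 < q := lt_of_le_of_lt hp hpq
    rcases eq_or_lt_of_le (mem_Ici.1 hp) with h | h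
    · subst h
      have := mul_nonneg (hc q hq2).le (hG0 q hq2)
      norm_num at this ⊢
      exact this
    · have := one_div_lt_one_div_of_lt (by linarith) hpq
      exact mul_le_mul (by linarith) (hGm h hq2 hpq.le) (hG0 p h) (hc q hq2).le
  · have : Tendsto (fun p => exp (A p)) atTop atTop := tendsto_exp_atTop.comp hAt
    refine tendsto_atTop_mono' _ ?_ this
    filter_upwards [eventually_gt_atTop 2] with p hp
    rw [hψ p hp]
    apply exp_le_exp.2
    have := mul_nonneg (hc p hp).le (hG0 p hp)
    linarith

theorem aux_two_rpow (p : ℝ) : (2:ℝ) ^ (p / 2) = exp (log 2 / 2 * p) := by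
  rw [rpow_def_of_pos (by norm_num)]; congr 1; ring

theorem aux_g_lb (p : ℝ) (hp : 2 < p) : 1 / 2 ≤ ((2:ℝ) ^ (p / 2) - 2) / (p - 2) := by
  rw [le_div_iff₀ (by linarith)]
  have h1 : (2:ℝ) ^ (p / 2) = 2 * exp (log 2 * ((p - 2) / 2)) := by
    rw [aux_two_rpow]
    have h0 : log 2 / 2 * p = log 2 + log 2 * ((p - 2) / 2) := by ring
    rw [h0, exp_add, exp_log (by norm_num)]
  have h2 := add_one_le_exp (log 2 * ((p - 2) / 2))
  have h3 := log_two_gt_d9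
  rw [h1]
  nlinarith

theorem aux_g_mono : MonotoneOn (fun p : ℝ => ((2:ℝ) ^ (p / 2) - 2) / (p - 2)) (Ioi 2) := by
  have hc : ConvexOn ℝ univ (fun p : ℝ => (2:ℝ) ^ (p / 2)) := by
    have := convexOn_exp.comp_linearMap (LinearMap.mulLeft ℝ (log 2 / 2))
    refine this.congr ?_ 
    intro p _
    simp [aux_two_rpow]
  intro p hp q hq hpq
  have hp' : (2:ℝ) < p := hp
  have hq' : (2:ℝ) < q := hq
  have := hc.secant_mono (a := 2) (x := p) (y := q) trivial trivial trivial
    hp'.ne' hq'.ne' hpq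
  simpa using this

theorem aux_pow_cont : Continuous (fun p : ℝ => (2:ℝ) ^ (p / 2)) := by
  have : (fun p : ℝ => (2:ℝ) ^ (p / 2)) = fun p => exp (log 2 / 2 * p) := funext aux_two_rpow
  rw [this]; fun_prop

theorem aux_g_cont : ContinuousOn (fun p : ℝ => ((2:ℝ) ^ (p / 2) - 2) / (p - 2)) (Ioi 2) := by
  apply ContinuousOn.div
  · exact (aux_pow_cont.sub continuous_const).continuousOn
  · fun_prop
  · intro x hx
    have : (2:ℝ) < x := hx
    linarith

theorem aux_A1t : Tendsto (fun p : ℝ => 1 / 2 * log (p / 2)) atTop atTop :=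
  (tendsto_log_atTop.comp (tendsto_id.atTop_div_const (by norm_num : (0:ℝ) < 2))).const_mul_atTop
    (by norm_num)

theorem aux_A1c : ContinuousOn (fun p : ℝ => 1 / 2 * log (p / 2)) (Ici 2) := by
  refine continuousOn_const.mul (ContinuousOn.log (by fun_prop) ?_)
  intro x hx
  have : (2:ℝ) ≤ x := hx
  positivity

/-- Properties of the BDG-type constants `ψ₁, ψ₂` (Lemma 8.2): continuity,
strict monotonicity on `[2, ∞)`, value `1` at `2`, and divergence to `∞`. -/
theorem stmt17
    (ψ1 ψ2 : ℝ → ℝ)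
    (hψ1two : ψ1 2 = 1) (hψ2two : ψ2 2 = 1)
    (hψ1 : ∀ p : ℝ, 2 < p →
      ψ1 p = (2 : ℝ) ^ (-(1 / p)) * p ^ ((1 : ℝ) / 2) *
        (((2 : ℝ) ^ (p / 2) - 2) / (p - 2)) ^ ((1 : ℝ) / 2 - 1 / p))
    (hψ2 : ∀ p : ℝ, 2 < p →
      ψ2 p = ((p - 1) / 2) ^ (1 / p) * p ^ ((1 : ℝ) / 2) *
        ((2 : ℝ) ^ (p / 2) + ((2 : ℝ) ^ (p / 2) - 2) / (p - 2)) ^ ((1 : ℝ) / 2 - 1 / p)) :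
    (ContinuousOn ψ1 (Ici 2) ∧ StrictMonoOn ψ1 (Ici 2) ∧ ψ1 2 = 1 ∧
      Tendsto ψ1 atTop atTop) ∧
    (ContinuousOn ψ2 (Ici 2) ∧ StrictMonoOn ψ2 (Ici 2) ∧ ψ2 2 = 1 ∧
      Tendsto ψ2 atTop atTop) := by
  constructor
  · refine aux_gen ψ1 (fun p => 1 / 2 * log (p / 2))
      (fun p => log (2 * (((2 : ℝ) ^ (p / 2) - 2) / (p - 2)))) hψ1two (by norm_num)
      aux_A1c ?_ aux_A1t ?_ ?_ ?_ ?_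
    · intro p hp q hq hpq
      have : (2:ℝ) ≤ p := hp
      have := log_lt_log (by positivity : 0 < p / 2) (by linarith : p / 2 < q / 2)
      simp only; linarith
    · refine ContinuousOn.log (continuousOn_const.mul aux_g_cont) ?_
      intro p hp
      have := aux_g_lb p hp
      positivity
    · intro p hp q hq hpq
      have h1 := aux_g_lb p hp
      have h2 := aux_g_mono hp hq hpq
      simp only at h2 ⊢
      exact log_le_log (by positivity) (by linarith)
    · intro p hp
      have h1 := aux_g_lb p hp
      exact log_nonneg (by linarith)
    · intro p hp
      have h1 := aux_g_lb p hp
      have hg : 0 < ((2 : ℝ) ^ (p / 2) - 2) / (p - 2) := by linarith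
      rw [hψ1 p hp, rpow_def_of_pos (by norm_num), rpow_def_of_pos (by linarith : 0 < p),
        rpow_def_of_pos hg, ← exp_add, ← exp_add,
        log_mul (by norm_num) hg.ne', log_div (by linarith : p ≠ 0) (by norm_num)]
      congr 1; ring
  · refine aux_gen ψ2 (fun p => 1 / 2 * log (p / 2) + 1 / p * log (p - 1))
      (fun p => log (2 * ((2 : ℝ) ^ (p / 2) + ((2 : ℝ) ^ (p / 2) - 2) / (p - 2))))
      hψ2two (by norm_num) ?_ ?_ ?_ ?_ ?_ ?_ ?_
    · refine aux_A1c.add (ContinuousOn.mul ?_ (ContinuousOn.log (by fun_prop) ?_))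
      · refine ContinuousOn.div continuousOn_const continuousOn_id ?_
        intro x hx
        have : (2:ℝ) ≤ x := hx
        simp; linarith
      · intro x hx
        have : (2:ℝ) ≤ x := hx
        linarith
    · intro p hp q hq hpq
      have hp2 : (2:ℝ) ≤ p := hp
      have hp0 : 0 < p := by linarith
      have hq0 : 0 < q := by linarith
      simp only
      have a1 : log (p - 1) ≤ log (q - 1) := log_le_log (by linarith) (by linarith)
      have a2 : 1 / q * log (p - 1) ≤ 1 / q * log (q - 1) :=
        mul_le_mul_of_nonneg_left a1 (by positivity)
      have a3 : log (p / q) ≤ p / q - 1 := log_le_sub_one_of_pos (by positivity)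
      rw [log_div hp0.ne' hq0.ne'] at a3
      have a4 : log ((p - 1) / 2) ≤ (p - 1) / 2 - 1 :=
        log_le_sub_one_of_pos (by linarith)
      rw [log_div (by linarith) (by norm_num)] at a4
      have a5 := log_two_lt_d9
      have a6 : log (p - 1) < p / 2 := by linarith
      have a7 : (1 / p - 1 / q) * log (p - 1) < (1 / p - 1 / q) * (p / 2) := by
        apply mul_lt_mul_of_pos_left a6
        have := one_div_lt_one_div_of_lt hp0 hpq
        linarith
      have a8 : (1 / p - 1 / q) * (p / 2) = 1 / 2 * (1 - p / q) := by
        field_simp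
      rw [log_div hp0.ne' (by norm_num), log_div hq0.ne' (by norm_num)]
      linarith
    · refine tendsto_atTop_mono' _ ?_ aux_A1t
      filter_upwards [eventually_gt_atTop 2] with p hp
      have := log_nonneg (by linarith : 1 ≤ p - 1)
      have : 0 ≤ 1 / p * log (p - 1) := mul_nonneg (by positivity) this
      linarith
    · refine ContinuousOn.log (continuousOn_const.mul (aux_pow_cont.continuousOn.add aux_g_cont)) ?_
      intro p hp
      have := aux_g_lb p hp
      positivity
    · intro p hp q hq hpq
      have h1 := aux_g_lb p hp
      have h2 := aux_g_mono hp hq hpq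
      have h3 : (2:ℝ) ^ (p / 2) ≤ (2:ℝ) ^ (q / 2) :=
        rpow_le_rpow_of_exponent_le (by norm_num) (by linarith)
      simp only at h2 ⊢
      exact log_le_log (by positivity) (by linarith)
    · intro p hp
      have h1 := aux_g_lb p hp
      have h3 : 0 < (2:ℝ) ^ (p / 2) := by positivity
      exact log_nonneg (by linarith)
    · intro p hp
      have h1 := aux_g_lb p hp
      have h3 : 0 < (2:ℝ) ^ (p / 2) := by positivity
      have hg : 0 < (2:ℝ) ^ (p / 2) + ((2 : ℝ) ^ (p / 2) - 2) / (p - 2) := by linarith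
      rw [hψ2 p hp, rpow_def_of_pos (by linarith : 0 < (p - 1) / 2),
        rpow_def_of_pos (by linarith : 0 < p),
        rpow_def_of_pos hg, ← exp_add, ← exp_add,
        log_mul (by norm_num) hg.ne', log_div (by linarith) (by norm_num),
        log_div (by linarith) (by norm_num)]
      congr 1; ring
end
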